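/- arXiv:2110.11345 — 3 statements merged into one kernel-verified Lean document; each statement's English description precedes it below -/
import Mathlib

section
/- Let G be a graph of order n, and suppose vertices v₁,…,v_t are deleted one at a time, where each v_i has degree at most n/8 in the graph G − {v₁,…,v_{i−1}}. Let H = G − {v₁,…,v_t}. Then ρ(H)² ≥ ρ(G)² − t·n/4. -/
open SimpleGraph

noncomputable def specRad {V : Type*} [Fintype V] [DecidableEq V] (G : SimpleGraph V) : ℝ :=
  letI := Classical.decRel G.Adj
  have h : (G.adjMatrix ℝ).IsHermitian := by
    ext i j
    simp [Matrix.conjTranspose_apply, SimpleGraph.adjMatrix_apply, G.adj_comm i j]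
  ⨆ i, h.eigenvalues i

/-!
Write `ρ = ρ(G)` and `ρ' = ρ(G - v)`, let `x` be an eigenvector of `G` for `ρ`, and let `z` be `x`
with its entry at `v` replaced by `0`. Then `zᵀ A z = ρ (|z|² - x_v²)`, which the Rayleigh principle
for `G - v` bounds by `ρ' |z|²`, and Cauchy–Schwarz applied to `ρ x_v = ∑_{w ∼ v} z_w` gives
`ρ² x_v² ≤ d(v) |z|²`. Together `ρ² ≤ ρ ρ' + d(v)`, and `2 ρ ρ' ≤ ρ² + ρ'²` turns this into
`ρ² ≤ ρ'² + 2 d(v)`, which is then summed over the deleted vertices.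
-/

open scoped Matrix

section SymmetricMatrix

variable {U V W X : Type*} [Fintype V] [Fintype W]

theorem dotProduct_mulVec_le_iSup_eigenvalues [DecidableEq V] {A : Matrix V V ℝ}
    (hA : A.IsHermitian) (x : V → ℝ) :
    x ⬝ᵥ A *ᵥ x ≤ (⨆ i, hA.eigenvalues i) * (x ⬝ᵥ x) := by
  set r := ⨆ i, hA.eigenvalues i
  have shifted_posSemidef : (algebraMap ℝ (Matrix V V ℝ) r - A).PosSemidef := by
    rw [Matrix.posSemidef_iff_isHermitian_and_spectrum_nonneg, ← spectrum.singleton_sub_eq,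
      hA.spectrum_real_eq_range_eigenvalues, Set.singleton_sub]
    refine ⟨(IsSelfAdjoint.all r).algebraMap _ |>.sub hA, ?_⟩
    rintro _ ⟨_, ⟨i, rfl⟩, rfl⟩
    exact sub_nonneg.2 (le_ciSup (Set.finite_range hA.eigenvalues).bddAbove i)
  have := shifted_posSemidef.dotProduct_mulVec_nonneg x
  rwa [star_trivial, Matrix.sub_mulVec, dotProduct_sub, Algebra.algebraMap_eq_smul_one,
    Matrix.smul_mulVec, Matrix.one_mulVec, dotProduct_smul, smul_eq_mul, sub_nonneg] at this

theorem exists_ne_zero_mulVec_eq_iSup_eigenvalues_smul [DecidableEq V] [Nonempty V]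
    {A : Matrix V V ℝ} (hA : A.IsHermitian) :
    ∃ x : V → ℝ, x ≠ 0 ∧ A *ᵥ x = (⨆ i, hA.eigenvalues i) • x := by
  obtain ⟨i, hi⟩ := exists_eq_ciSup_of_finite (f := hA.eigenvalues)
  refine ⟨hA.eigenvectorBasis i, fun h ↦ ?_, hi ▸ hA.mulVec_eigenvectorBasis i⟩
  exact hA.eigenvectorBasis.orthonormal.ne_zero i (PiLp.ext (congrFun h))

theorem comp_dotProduct_comp_of_support_subset_range {R : Type*} [NonUnitalNonAssocSemiring R]
    {f : W → V} (hf : f.Injective) {x : V → R} (hx : x.support ⊆ Set.range f) (y : V → R) :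
    (x ∘ f) ⬝ᵥ (y ∘ f) = x ⬝ᵥ y :=
  Fintype.sum_of_injective f hf _ _
    (fun u hu ↦ by rw [Function.notMem_support.1 fun h ↦ hu (hx h), zero_mul]) fun _ ↦ rfl

theorem submatrix_mulVec_comp_of_support_subset_range {R : Type*} [NonUnitalCommSemiring R]
    {f : W → V} (hf : f.Injective) {x : V → R} (hx : x.support ⊆ Set.range f)
    (A : Matrix U V R) (g : X → U) :
    A.submatrix g f *ᵥ (x ∘ f) = (A *ᵥ x) ∘ g := by
  funext i
  calc (A.submatrix g f *ᵥ (x ∘ f)) i = (x ∘ f) ⬝ᵥ (A (g i) ∘ f) := dotProduct_comm _ _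
    _ = x ⬝ᵥ A (g i) := comp_dotProduct_comp_of_support_subset_range hf hx _
    _ = (A *ᵥ x) (g i) := dotProduct_comm _ _

variable [DecidableEq V]

theorem row_dotProduct_update_zero {R : Type*} [NonUnitalNonAssocSemiring R]
    {A : Matrix U V R} {i : U} {v : V} (hAv : A i v = 0) (x : V → R) :
    A i ⬝ᵥ Function.update x v 0 = (A *ᵥ x) i := by
  refine Finset.sum_congr rfl fun w _ ↦ ?_
  rcases eq_or_ne w v with rfl | hw
  · simp [hAv]
  · simp [hw]

theorem update_zero_dotProduct_mulVec_update_zero {R : Type*} [CommRing R] {A : Matrix V V R}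
    (hA : A.IsSymm) {v : V} (hAv : A v v = 0) {x : V → R} {r : R} (hx : A *ᵥ x = r • x) :
    Function.update x v 0 ⬝ᵥ A *ᵥ Function.update x v 0 =
      r * (Function.update x v 0 ⬝ᵥ Function.update x v 0 - x v ^ 2) := by
  set z := Function.update x v 0 with hz
  have z_eq_sub : z = x - Pi.single v (x v) := by
    ext u
    rcases eq_or_ne u v with rfl | hu
    · simp [hz]
    · simp [hz, hu]
  have dotProduct_eq_self : z ⬝ᵥ x = z ⬝ᵥ z := by
    have hzv : z v = 0 := Function.update_self v 0 x
    nth_rw 3 [z_eq_sub]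
    rw [dotProduct_sub, dotProduct_single, hzv, zero_mul, sub_zero]
  have dotProduct_col : z ⬝ᵥ A.col v = r * x v := by
    rw [dotProduct_comm, ← Matrix.row_transpose, hA.eq]
    exact (row_dotProduct_update_zero hAv x).trans (congrFun hx v)
  calc z ⬝ᵥ A *ᵥ z = z ⬝ᵥ A *ᵥ x - z ⬝ᵥ A *ᵥ Pi.single v (x v) := by
        rw [← dotProduct_sub, ← Matrix.mulVec_sub, ← z_eq_sub]
    _ = r * (z ⬝ᵥ z) - x v * (r * x v) := by
        rw [hx, Matrix.mulVec_single, dotProduct_smul, dotProduct_smul, dotProduct_eq_self,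
          dotProduct_col, smul_eq_mul, op_smul_eq_mul, mul_comm (x v)]
    _ = r * (z ⬝ᵥ z - x v ^ 2) := by ring

theorem sq_le_mul_add_sum_row_sq_of_mulVec_eq_smul {A : Matrix V V ℝ} (hA : A.IsSymm) {v : V}
    (hAv : A v v = 0) {x : V → ℝ} (hx₀ : x ≠ 0) {r s : ℝ} (hr : 0 ≤ r) (hx : A *ᵥ x = r • x)
    (hs : Function.update x v 0 ⬝ᵥ A *ᵥ Function.update x v 0 ≤
      s * (Function.update x v 0 ⬝ᵥ Function.update x v 0)) :
    r ^ 2 ≤ r * s + ∑ w, A v w ^ 2 := by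
  rw [update_zero_dotProduct_mulVec_update_zero hA hAv hx] at hs
  have row_dotProduct : A v ⬝ᵥ Function.update x v 0 = r * x v := by
    rw [row_dotProduct_update_zero hAv, hx, Pi.smul_apply, smul_eq_mul]
  generalize hz : Function.update x v 0 = z at *
  rcases eq_or_ne z 0 with rfl | hz₀
  · have hxv : x v ≠ 0 := fun h ↦ hx₀ (by rw [← hz, ← h, Function.update_eq_self])
    have hr₀ : r = 0 := by simpa [hxv] using row_dotProduct.symm
    rw [hr₀, zero_mul, zero_add, sq, zero_mul]
    exact Finset.sum_nonneg fun w _ ↦ sq_nonneg _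
  · have cauchy_schwarz : (r * x v) ^ 2 ≤ (∑ w, A v w ^ 2) * (z ⬝ᵥ z) := by
      rw [← row_dotProduct]
      simpa only [dotProduct, ← sq] using Finset.sum_mul_sq_le_sq_mul_sq Finset.univ (A v) z
    have z_pos : 0 < z ⬝ᵥ z := by simpa using Matrix.dotProduct_star_self_pos_iff.2 hz₀
    refine le_of_mul_le_mul_right ?_ z_pos
    linarith [mul_le_mul_of_nonneg_left hs hr]

end SymmetricMatrix

section SpecRad

variable {V W : Type*} [Fintype V] [Fintype W] {G : SimpleGraph V} {H : SimpleGraph W}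

theorem specRad_eq_iSup_eigenvalues [DecidableEq V] (G : SimpleGraph V)
    [inst : DecidableRel G.Adj] :
    specRad G = ⨆ i, (G.isHermitian_adjMatrix ℝ).eigenvalues i := by
  obtain rfl : inst = Classical.decRel G.Adj := Subsingleton.elim _ _
  rfl

theorem dotProduct_adjMatrix_mulVec_le_specRad [DecidableEq V] (G : SimpleGraph V)
    [DecidableRel G.Adj] (x : V → ℝ) :
    x ⬝ᵥ G.adjMatrix ℝ *ᵥ x ≤ specRad G * (x ⬝ᵥ x) :=
  specRad_eq_iSup_eigenvalues G ▸ dotProduct_mulVec_le_iSup_eigenvalues _ x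

theorem exists_ne_zero_adjMatrix_mulVec_eq_specRad_smul [DecidableEq V] [Nonempty V]
    (G : SimpleGraph V) [DecidableRel G.Adj] :
    ∃ x : V → ℝ, x ≠ 0 ∧ G.adjMatrix ℝ *ᵥ x = specRad G • x :=
  specRad_eq_iSup_eigenvalues G ▸ exists_ne_zero_mulVec_eq_iSup_eigenvalues_smul _

theorem specRad_nonneg [DecidableEq V] (G : SimpleGraph V) : 0 ≤ specRad G := by
  classical
  rcases isEmpty_or_nonempty V with _ | ⟨⟨v⟩⟩
  · simp [specRad]
  · simpa using dotProduct_adjMatrix_mulVec_le_specRad G (Pi.single v 1)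

theorem specRad_le_of_forall_dotProduct_mulVec_le [DecidableEq V] [DecidableRel G.Adj]
    {r : ℝ} (hr : 0 ≤ r) (h : ∀ x : V → ℝ, x ⬝ᵥ G.adjMatrix ℝ *ᵥ x ≤ r * (x ⬝ᵥ x)) :
    specRad G ≤ r := by
  rcases isEmpty_or_nonempty V with _ | _
  · simpa [specRad] using hr
  · obtain ⟨x, hx₀, hx⟩ := exists_ne_zero_adjMatrix_mulVec_eq_specRad_smul G
    have x_pos : 0 < x ⬝ᵥ x := by simpa using Matrix.dotProduct_star_self_pos_iff.2 hx₀
    refine le_of_mul_le_mul_right ?_ x_pos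
    simpa only [hx, dotProduct_smul, smul_eq_mul] using h x

theorem comp_embedding_dotProduct_adjMatrix_mulVec {R : Type*} [CommSemiring R]
    [DecidableRel G.Adj] [DecidableRel H.Adj] (f : H ↪g G) {x : V → R}
    (hx : x.support ⊆ Set.range f) :
    (x ∘ f) ⬝ᵥ H.adjMatrix R *ᵥ (x ∘ f) = x ⬝ᵥ G.adjMatrix R *ᵥ x := by
  rw [← f.submatrix_adjMatrix R, submatrix_mulVec_comp_of_support_subset_range f.injective hx,
    comp_dotProduct_comp_of_support_subset_range f.injective hx]

theorem dotProduct_adjMatrix_mulVec_le_specRad_of_support_subset_range [DecidableEq W]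
    [DecidableRel G.Adj] (f : H ↪g G) {x : V → ℝ} (hx : x.support ⊆ Set.range f) :
    x ⬝ᵥ G.adjMatrix ℝ *ᵥ x ≤ specRad H * (x ⬝ᵥ x) := by
  classical
  rw [← comp_embedding_dotProduct_adjMatrix_mulVec f hx,
    ← comp_dotProduct_comp_of_support_subset_range f.injective hx]
  exact dotProduct_adjMatrix_mulVec_le_specRad H _

theorem specRad_le_specRad_of_embedding [DecidableEq V] [DecidableEq W] (f : H ↪g G) :
    specRad H ≤ specRad G := by
  classical
  refine specRad_le_of_forall_dotProduct_mulVec_le (specRad_nonneg G) fun x ↦ ?_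
  obtain ⟨y, hy, rfl⟩ : ∃ y : V → ℝ, y.support ⊆ Set.range f ∧ y ∘ f = x :=
    ⟨Function.extend f x 0, fun u hu ↦ by_contra fun h ↦ hu (Function.extend_apply' _ _ _ h),
      Function.extend_comp f.injective x 0⟩
  rw [comp_embedding_dotProduct_adjMatrix_mulVec f hy,
    comp_dotProduct_comp_of_support_subset_range f.injective hy]
  exact dotProduct_adjMatrix_mulVec_le_specRad G y

theorem specRad_sq_le_mul_add_degree [DecidableEq V] [DecidableEq W] [DecidableRel G.Adj]
    (f : H ↪g G) {v : V} (hf : {v}ᶜ ⊆ Set.range f) :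
    specRad G ^ 2 ≤ specRad G * specRad H + G.degree v := by
  have : Nonempty V := ⟨v⟩
  obtain ⟨x, hx₀, hx⟩ := exists_ne_zero_adjMatrix_mulVec_eq_specRad_smul G
  have support_subset : (Function.update x v 0).support ⊆ Set.range f := fun u hu ↦
    hf fun huv ↦ hu (by rw [Set.mem_singleton_iff.1 huv, Function.update_self])
  have sum_row_sq : ∑ w, G.adjMatrix ℝ v w ^ 2 = G.degree v := by
    rw [← SimpleGraph.adjMatrix_mul_self_apply_self, Matrix.mul_apply]
    exact Finset.sum_congr rfl fun w _ ↦ by rw [sq, G.isSymm_adjMatrix.apply v w]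
  rw [← sum_row_sq]
  exact sq_le_mul_add_sum_row_sq_of_mulVec_eq_smul G.isSymm_adjMatrix (by simp) hx₀
    (specRad_nonneg G) hx
    (dotProduct_adjMatrix_mulVec_le_specRad_of_support_subset_range f support_subset)

theorem specRad_sq_le_sq_add_two_mul_degree [DecidableEq V] [DecidableEq W] [DecidableRel G.Adj]
    (f : H ↪g G) {v : V} (hf : {v}ᶜ ⊆ Set.range f) :
    specRad G ^ 2 ≤ specRad H ^ 2 + 2 * G.degree v := by
  linarith [specRad_sq_le_mul_add_degree f hf, two_mul_le_add_sq (specRad G) (specRad H)]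

end SpecRad

section Deletion

variable {V : Type*} {S : Set V}

theorem degree_induce_eq_ncard {G : SimpleGraph V} (v : S)
    [Fintype ((G.induce S).neighborSet v)] :
    (G.induce S).degree v = {u | G.Adj v u ∧ u ∈ S}.ncard := by
  have image_neighborSet :
      Subtype.val '' (G.induce S).neighborSet v = {u | G.Adj v u ∧ u ∈ S} := by
    ext u
    simp
  rw [← image_neighborSet, Set.ncard_image_of_injective _ Subtype.val_injective,
    Set.ncard_eq_toFinset_card', ← SimpleGraph.card_neighborFinset_eq_degree,
    SimpleGraph.neighborFinset]

theorem specRad_induce_sq_le_sq_add_two_mul_ncard [DecidableEq V] (G : SimpleGraph V) {T : Set V}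
    [Fintype S] [Fintype T] {v : V} (hT : T = S \ {v}) :
    specRad (G.induce S) ^ 2 ≤
      specRad (G.induce T) ^ 2 + 2 * ({u | G.Adj v u ∧ u ∈ S}.ncard : ℝ) := by
  classical
  by_cases hv : v ∈ S
  · rw [← degree_induce_eq_ncard ⟨v, hv⟩]
    refine specRad_sq_le_sq_add_two_mul_degree (G.induceHomOfLE (hT ▸ Set.sdiff_subset)) ?_
    rintro ⟨u, hu⟩ huv
    exact ⟨⟨u, by simp_all⟩, rfl⟩
  · have hST : S ⊆ T := by rw [hT, Set.sdiff_singleton_eq_self hv]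
    have := pow_le_pow_left₀ (specRad_nonneg _)
      (specRad_le_specRad_of_embedding (G.induceHomOfLE hST)) 2
    exact this.trans (le_add_of_nonneg_right (by positivity))

end Deletion

theorem stmt6_general {V : Type*} [Fintype V] [DecidableEq V] (G : SimpleGraph V) {t : ℕ}
    (v : Fin t → V) :
    specRad G ^ 2 ≤ specRad (G.induce {u : V | ∀ i : Fin t, v i ≠ u}) ^ 2 +
      2 * ∑ i : Fin t, ({u : V | G.Adj (v i) u ∧ ∀ j : Fin t, j < i → v j ≠ u}.ncard : ℝ) := by
  induction t with
  | zero =>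
    let f : G ↪g G.induce {u : V | ∀ i : Fin 0, v i ≠ u} :=
      ⟨⟨fun u ↦ ⟨u, finZeroElim⟩, fun _ _ h ↦ congrArg Subtype.val h⟩, Iff.rfl⟩
    simpa using pow_le_pow_left₀ (specRad_nonneg G) (specRad_le_specRad_of_embedding f) 2
  | succ t ih =>
    have delete_last : {u : V | ∀ i, v i ≠ u} =
        {u : V | ∀ i : Fin t, v i.castSucc ≠ u} \ {v (Fin.last t)} := by
      ext u
      simp [Fin.forall_fin_succ', eq_comm]
    have delete_preceding := ih fun i ↦ v i.castSucc
    have step := specRad_induce_sq_le_sq_add_two_mul_ncard G delete_last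
    have sum_eq : ∑ i, ({u : V | G.Adj (v i) u ∧ ∀ j, j < i → v j ≠ u}.ncard : ℝ) =
        ∑ i : Fin t,
          ({u : V | G.Adj (v i.castSucc) u ∧ ∀ j : Fin t, j < i → v j.castSucc ≠ u}.ncard : ℝ) +
        ({u : V | G.Adj (v (Fin.last t)) u ∧ ∀ j : Fin t, v j.castSucc ≠ u}.ncard : ℝ) := by
      simp [Fin.sum_univ_castSucc, Fin.forall_fin_succ', (Fin.castSucc_lt_last _).not_gt]
    rw [sum_eq]
    simp only [Set.mem_ofPred_eq] at step
    linarith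

/-- Deleting `t` vertices one at a time, each of degree at most `n/8` in the current graph,
decreases `ρ²` by at most `t·n/4`. -/
theorem stmt6 {V : Type*} [Fintype V] [DecidableEq V] (G : SimpleGraph V)
    [DecidableRel G.Adj] (n t : ℕ) (hcard : Fintype.card V = n)
    (v : Fin t → V) (hv : Function.Injective v)
    (hdeg : ∀ i : Fin t,
      (({u : V | G.Adj (v i) u ∧ ∀ j : Fin t, j < i → v j ≠ u}.ncard : ℝ)) ≤ n / 8) :
    specRad G ^ 2 - t * n / 4 ≤
      specRad (G.induce {u : V | ∀ i : Fin t, v i ≠ u}) ^ 2 := by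
  have sum_le := Finset.sum_le_card_nsmul Finset.univ _ _ fun i _ ↦ hdeg i
  rw [Finset.card_fin, nsmul_eq_mul] at sum_le
  linarith [stmt6_general G v]
end

section
/- Let G be a graph containing an induced bipartite subgraph H with parts V₁, V₂ such that: any two vertices of H in the same part have more than k common neighbors in H, and for all v₁ ∈ V₁, v₂ ∈ V₂ and each 2 ≤ l ≤ k there is a v₁–v₂ path of order 2l in H. If G contains a cycle C₅ = z₁z₂z₃z₄z₅z₁ with two vertices u ∈ V₁ and v ∈ V₂ both on C₅, then G contains a cycle of length 2k+1. -/
open SimpleGraph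

/-!
`V₁ ∪ V₂` cuts an odd cycle that meets it at least twice into ears. The sides `V₁`, `V₂` change an
even number of times around the cycle, so some ear has a length of the wrong parity for the sides
of its ends. In the bipartite subgraph these ends are joined by paths of every length of the right
parity from `2` to `2k - 1`, found greedily through common neighbors. Such a path of the
complementary length closes the ear to a cycle of length `2k + 1`.
-/

section Greedy

variable {V : Type*} {G : SimpleGraph V} {A B : Set V} {a b : V} {n : ℕ}

lemma natCast_le_encard_sdiff_singleton {s : Set V} (hs : ((n + 1 : ℕ) : ℕ∞) ≤ s.encard) (x : V) :
    (n : ℕ∞) ≤ (s \ {x}).encard := by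
  refine le_trans ?_ (s.encard_tsub_one_le_encard_sdiff_singleton x)
  simpa using tsub_le_tsub_right hs 1

lemma exists_mem_adj_adj_of_le_encard
    (h : ((n + 1 : ℕ) : ℕ∞) ≤ (B ∩ G.commonNeighbors a b).encard) :
    ∃ w ∈ B, G.Adj a w ∧ G.Adj b w :=
  Set.encard_pos.1 ((Nat.cast_pos.2 n.succ_pos).trans_le h)

lemma natCast_le_encard_sdiff_singleton_inter_commonNeighbors
    (h : ((n + 1 : ℕ) : ℕ∞) ≤ (B ∩ G.commonNeighbors a b).encard) (w : V) :
    (n : ℕ∞) ≤ ((B \ {w}) ∩ G.commonNeighbors a b).encard := by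
  rw [← Set.inter_sdiff_right_comm]
  exact natCast_le_encard_sdiff_singleton h w

lemma exists_isPath_length_eq_two_mul (hdisj : Disjoint A B)
    (hcard : ((n + 2 : ℕ) : ℕ∞) ≤ A.encard)
    (hcodeg : ∀ u ∈ A, ∀ v ∈ A, ((n + 1 : ℕ) : ℕ∞) ≤ (B ∩ G.commonNeighbors u v).encard)
    (ha : a ∈ A) (hb : b ∈ A) (hab : a ≠ b) :
    ∃ p : G.Walk a b, p.IsPath ∧ (∀ x ∈ p.support, x ∈ A ∪ B) ∧ p.length = 2 * (n + 1) := by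
  induction n generalizing A B a with
  | zero =>
    obtain ⟨w, hw, haw, hbw⟩ := exists_mem_adj_adj_of_le_encard (hcodeg a ha b hb)
    exact ⟨.cons haw hbw.symm.toWalk, by simp [haw.ne, hab, hbw.ne'], by simp [ha, hb, hw], rfl⟩
  | succ n ih =>
    have hcard' := natCast_le_encard_sdiff_singleton hcard a
    obtain ⟨c, hc, hcb⟩ : ∃ c ∈ A \ {a}, c ≠ b :=
      Set.exists_ne_of_one_lt_encard ((Nat.one_lt_cast.2 (by lia)).trans_le hcard') b
    obtain ⟨w, hw, haw, hcw⟩ := exists_mem_adj_adj_of_le_encard (hcodeg a ha c hc.1)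
    -- Deleting `a` and `w` keeps the rest of the path away from both.
    obtain ⟨p, hp, hpAB, hlen⟩ := ih (B := B \ {w})
      (hdisj.mono Set.sdiff_subset Set.sdiff_subset) hcard'
      (fun u hu v hv ↦
        natCast_le_encard_sdiff_singleton_inter_commonNeighbors (hcodeg u hu.1 v hv.1) w)
      hc ⟨hb, hab.symm⟩ hcb
    have hap : a ∉ p.support := fun h ↦ by
      rcases hpAB a h with h | h
      exacts [h.2 rfl, hdisj.notMem_of_mem_left ha h.1]
    have hwp : w ∉ p.support := fun h ↦ by
      rcases hpAB w h with h | h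
      exacts [hdisj.notMem_of_mem_left h.1 hw, h.2 rfl]
    refine ⟨.cons haw (.cons hcw.symm p), by simp [hp, hwp, hap, haw.ne], ?_,
      by simp only [Walk.length_cons]; lia⟩
    simp only [Walk.support_cons, List.forall_mem_cons]
    exact ⟨.inl ha, .inr hw, fun x hx ↦ (hpAB x hx).imp And.left And.left⟩

lemma exists_isPath_length_eq_two_mul_add_one (hdisj : Disjoint A B)
    (hcard : ((n + 2 : ℕ) : ℕ∞) ≤ A.encard)
    (hcodeg : ∀ u ∈ A, ∀ v ∈ A, ((n + 2 : ℕ) : ℕ∞) ≤ (B ∩ G.commonNeighbors u v).encard)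
    (hdeg : 1 < (A ∩ G.neighborSet b).encard) (ha : a ∈ A) (hb : b ∈ B) :
    ∃ p : G.Walk a b, p.IsPath ∧ (∀ x ∈ p.support, x ∈ A ∪ B) ∧ p.length = 2 * (n + 1) + 1 := by
  obtain ⟨c, ⟨hc, hbc⟩, hca⟩ := Set.exists_ne_of_one_lt_encard hdeg a
  obtain ⟨p, hp, hpAB, hlen⟩ := exists_isPath_length_eq_two_mul (B := B \ {b})
    (hdisj.mono_right Set.sdiff_subset) hcard
    (fun u hu v hv ↦ natCast_le_encard_sdiff_singleton_inter_commonNeighbors (hcodeg u hu v hv) b)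
    ha hc hca.symm
  have hbp : b ∉ p.support := fun h ↦ by
    rcases hpAB b h with h | h
    exacts [hdisj.notMem_of_mem_left h hb, h.2 rfl]
  refine ⟨p.concat (hbc : G.Adj b c).symm, hp.concat hbp _, fun x hx ↦ ?_, by simp [hlen]⟩
  rw [Walk.support_concat, List.mem_append, List.mem_singleton] at hx
  rcases hx with hx | rfl
  exacts [(hpAB x hx).imp_right And.left, .inr hb]

end Greedy

section Ear

variable {V : Type*} {G : SimpleGraph V} {A S : Set V} {a b x y : V}

/-- An ear of `S`: a path with both ends in `S` and no inner vertex in `S`. A single edge inside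
`S` counts as an ear. -/
structure IsEar (S : Set V) (p : G.Walk a b) : Prop where
  isPath : p.IsPath
  start_mem : a ∈ S
  end_mem : b ∈ S
  eq_or_eq_of_mem : ∀ x ∈ p.support, x ∈ S → x = a ∨ x = b

/-- The length of `p` has the wrong parity for a walk that crosses between `A` and its complement
at every step. -/
def HasWrongParity (A : Set V) (p : G.Walk a b) : Prop :=
  Odd p.length ↔ (a ∈ A ↔ b ∈ A)

lemma HasWrongParity.left_or_right_of_append {p : G.Walk a x} {q : G.Walk x b}
    (h : HasWrongParity A (p.append q)) : HasWrongParity A p ∨ HasWrongParity A q := by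
  rw [HasWrongParity, Walk.length_append, Nat.odd_add, ← Nat.not_odd_iff_even] at h
  simp only [HasWrongParity]
  tauto

lemma exists_isEar_hasWrongParity_of_isPath {p : G.Walk a b} (hp : p.IsPath) (ha : a ∈ S)
    (hb : b ∈ S) (hpar : HasWrongParity A p) :
    ∃ (x y : V) (q : G.Walk x y), IsEar S q ∧ HasWrongParity A q ∧ q.length ≤ p.length := by
  induction hn : p.length using Nat.strong_induction_on generalizing a b with
  | _ n ih =>
  subst hn
  by_cases hear : ∀ x ∈ p.support, x ∈ S → x = a ∨ x = b
  · exact ⟨a, b, p, ⟨hp, ha, hb, hear⟩, hpar, le_rfl⟩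
  push Not at hear
  obtain ⟨x, hxp, hxS, hxa, hxb⟩ := hear
  obtain ⟨q, r, hq, hr, rfl⟩ := hp.mem_support_iff_exists_append.1 hxp
  have hq0 := Walk.not_nil_iff_lt_length.1 (Walk.not_nil_of_ne (p := q) hxa.symm)
  have hr0 := Walk.not_nil_iff_lt_length.1 (Walk.not_nil_of_ne (p := r) hxb)
  rw [Walk.length_append] at ih ⊢
  rcases hpar.left_or_right_of_append with hpar | hpar
  · obtain ⟨y, z, e, he, hepar, hle⟩ := ih q.length (by lia) hq ha hxS hpar rfl
    exact ⟨y, z, e, he, hepar, by lia⟩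
  · obtain ⟨y, z, e, he, hepar, hle⟩ := ih r.length (by lia) hr hxS hb hpar rfl
    exact ⟨y, z, e, he, hepar, by lia⟩

lemma exists_isEar_hasWrongParity_of_isCycle {c : G.Walk a a} (hc : c.IsCycle)
    (hodd : Odd c.length) (hxy : x ≠ y) (hx : x ∈ S) (hy : y ∈ S) (hxc : x ∈ c.support)
    (hyc : y ∈ c.support) (A : Set V) :
    ∃ (u v : V) (q : G.Walk u v), IsEar S q ∧ HasWrongParity A q ∧ q.length < c.length := by
  classical
  have hyr : y ∈ (c.rotate x hxc).support := by simpa using hyc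
  obtain ⟨p, q, hpq⟩ := Walk.mem_support_iff_exists_append.1 hyr
  have hcyc : (p.append q).IsCycle := hpq ▸ (Walk.isCycle_rotate hxc).2 hc
  have hlen : p.length + q.length = c.length := by
    rw [← Walk.length_append, ← hpq, Walk.length_rotate]
  have hpar : HasWrongParity A (p.append q) := by
    simpa [HasWrongParity, hlen] using hodd
  have hp : ¬ p.Nil := Walk.not_nil_of_ne hxy
  have hq : ¬ q.Nil := Walk.not_nil_of_ne hxy.symm
  have hp0 := Walk.not_nil_iff_lt_length.1 hp
  have hq0 := Walk.not_nil_iff_lt_length.1 hq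
  rcases hpar.left_or_right_of_append with hpar | hpar
  · obtain ⟨u, v, e, he, hepar, hle⟩ := exists_isEar_hasWrongParity_of_isPath
      (hcyc.isPath_of_append_left hq) hx hy hpar
    exact ⟨u, v, e, he, hepar, by lia⟩
  · obtain ⟨u, v, e, he, hepar, hle⟩ := exists_isEar_hasWrongParity_of_isPath
      (hcyc.isPath_of_append_right hp) hy hx hpar
    exact ⟨u, v, e, he, hepar, by lia⟩

lemma IsEar.ne_of_hasWrongParity {p : G.Walk a b} (hp : IsEar S p) (hpar : HasWrongParity A p) :
    a ≠ b := by
  rintro rfl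
  simp [HasWrongParity, (Walk.isPath_iff_nil.1 hp.isPath).length_eq_zero] at hpar

lemma start_notMem_tail_support_of_isPath {p : G.Walk a b} (hp : p.IsPath) :
    a ∉ p.support.tail := by
  have hnodup := hp.support_nodup
  rw [← Walk.cons_tail_support] at hnodup
  exact (List.nodup_cons.1 hnodup).1

lemma IsEar.isCycle_append {p : G.Walk a b} {q : G.Walk b a} (hp : IsEar S p) (hq : q.IsPath)
    (hqS : ∀ x ∈ q.support, x ∈ S) (hlen : 1 < p.length) : (p.append q).IsCycle := by
  refine hp.isPath.isCycle_append hq (fun x hxp hxq ↦ ?_) (.inl hlen)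
  rcases hp.eq_or_eq_of_mem x (List.mem_of_mem_tail hxp) (hqS x (List.mem_of_mem_tail hxq))
    with rfl | rfl
  · exact start_notMem_tail_support_of_isPath hp.isPath hxp
  · exact start_notMem_tail_support_of_isPath hq hxq

end Ear

/-- `A` and `B` are the parts of an induced bipartite subgraph of `G` in which any two vertices of
the same part have at least `k` common neighbors. Both vertices may coincide, so that the minimum
degree is at least `k` as well. -/
structure IsCodegreeBipartition {V : Type*} (G : SimpleGraph V) (A B : Set V) (k : ℕ) : Prop where
  disjoint : Disjoint A B
  isIndepSet_left : G.IsIndepSet A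
  isIndepSet_right : G.IsIndepSet B
  le_encard_left : ∀ u ∈ A, ∀ v ∈ A, (k : ℕ∞) ≤ (B ∩ G.commonNeighbors u v).encard
  le_encard_right : ∀ u ∈ B, ∀ v ∈ B, (k : ℕ∞) ≤ (A ∩ G.commonNeighbors u v).encard

namespace IsCodegreeBipartition

variable {V : Type*} {G : SimpleGraph V} {A B : Set V} {k n : ℕ} {a b x y : V}

lemma symm (h : IsCodegreeBipartition G A B k) : IsCodegreeBipartition G B A k :=
  ⟨h.disjoint.symm, h.isIndepSet_right, h.isIndepSet_left, h.le_encard_right, h.le_encard_left⟩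

lemma le_encard_inter_neighborSet_right (h : IsCodegreeBipartition G A B k) (hb : b ∈ B) :
    (k : ℕ∞) ≤ (A ∩ G.neighborSet b).encard := by
  simpa [commonNeighbors_eq] using h.le_encard_right b hb b hb

lemma le_encard_of_mem_right (h : IsCodegreeBipartition G A B k) (hb : b ∈ B) :
    (k : ℕ∞) ≤ A.encard :=
  (h.le_encard_inter_neighborSet_right hb).trans (Set.encard_mono Set.inter_subset_left)

lemma le_encard_of_mem_left (h : IsCodegreeBipartition G A B k) (hk : k ≠ 0) (ha : a ∈ A) :
    (k : ℕ∞) ≤ A.encard := by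
  have hB : 0 < B.encard := (Nat.cast_pos.2 hk.pos).trans_le (h.symm.le_encard_of_mem_right ha)
  obtain ⟨b, hb⟩ := Set.encard_pos.1 hB
  exact h.le_encard_of_mem_right hb

lemma not_hasWrongParity_toWalk (h : IsCodegreeBipartition G A B k) (ha : a ∈ A ∪ B)
    (hb : b ∈ A ∪ B) (hab : G.Adj a b) : ¬ HasWrongParity A hab.toWalk := by
  intro hpar
  have hside : a ∈ A ↔ b ∈ A := by simpa [HasWrongParity] using hpar
  by_cases haA : a ∈ A
  · exact h.isIndepSet_left haA (hside.1 haA) hab.ne hab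
  · exact h.isIndepSet_right (ha.resolve_left haA) (hb.resolve_left (mt hside.2 haA)) hab.ne hab

lemma one_lt_length_of_hasWrongParity (h : IsCodegreeBipartition G A B k) {p : G.Walk a b}
    (ha : a ∈ A ∪ B) (hb : b ∈ A ∪ B) (hpar : HasWrongParity A p) : 1 < p.length := by
  match p, hpar with
  | .nil, hpar => simp [HasWrongParity] at hpar
  | .cons hab .nil, hpar => exact absurd hpar (h.not_hasWrongParity_toWalk ha hb hab)
  | .cons _ (.cons _ _), _ => simp

lemma exists_isPath_of_mem_left_left (h : IsCodegreeBipartition G A B k) (hx : x ∈ A) (hy : y ∈ A)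
    (hxy : x ≠ y) (hn : n + 2 ≤ k) :
    ∃ p : G.Walk x y, p.IsPath ∧ (∀ z ∈ p.support, z ∈ A ∪ B) ∧ p.length = 2 * (n + 1) :=
  exists_isPath_length_eq_two_mul h.disjoint
    ((Nat.cast_le.2 hn).trans (h.le_encard_of_mem_left (by lia) hx))
    (fun u hu v hv ↦ (Nat.cast_le.2 (by lia)).trans (h.le_encard_left u hu v hv)) hx hy hxy

lemma exists_isPath_of_mem_left_right (h : IsCodegreeBipartition G A B k) (hx : x ∈ A)
    (hy : y ∈ B) (hn : n + 2 ≤ k) :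
    ∃ p : G.Walk x y, p.IsPath ∧ (∀ z ∈ p.support, z ∈ A ∪ B) ∧ p.length = 2 * (n + 1) + 1 :=
  exists_isPath_length_eq_two_mul_add_one h.disjoint
    ((Nat.cast_le.2 hn).trans (h.le_encard_of_mem_right hy))
    (fun u hu v hv ↦ (Nat.cast_le.2 hn).trans (h.le_encard_left u hu v hv))
    ((Nat.one_lt_cast.2 (by lia)).trans_le (h.le_encard_inter_neighborSet_right hy)) hx hy

lemma exists_isPath_length_eq_of_mem_left (h : IsCodegreeBipartition G A B k) (hx : x ∈ A)
    (hy : y ∈ A ∪ B) (hxy : x ≠ y) (hpar : Odd n ↔ y ∈ B) (hn : 2 ≤ n) (hnk : n < 2 * k) :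
    ∃ p : G.Walk x y, p.IsPath ∧ (∀ z ∈ p.support, z ∈ A ∪ B) ∧ p.length = n := by
  rcases hy with hy | hy
  · obtain ⟨m, rfl⟩ : ∃ m, n = 2 * (m + 1) := by
      obtain ⟨m, hm⟩ := Nat.not_odd_iff_even.1 (mt hpar.1 (h.disjoint.notMem_of_mem_left hy))
      exact ⟨m - 1, by lia⟩
    exact h.exists_isPath_of_mem_left_left hx hy hxy (by lia)
  · obtain ⟨m, rfl⟩ : ∃ m, n = 2 * (m + 1) + 1 := by
      obtain ⟨m, hm⟩ := hpar.2 hy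
      exact ⟨m - 1, by lia⟩
    exact h.exists_isPath_of_mem_left_right hx hy (by lia)

lemma exists_isPath_length_eq (h : IsCodegreeBipartition G A B k) (hx : x ∈ A ∪ B)
    (hy : y ∈ A ∪ B) (hxy : x ≠ y) (hpar : Odd n ↔ ¬ (x ∈ A ↔ y ∈ A)) (hn : 2 ≤ n)
    (hnk : n < 2 * k) :
    ∃ p : G.Walk x y, p.IsPath ∧ (∀ z ∈ p.support, z ∈ A ∪ B) ∧ p.length = n := by
  have hyAB : y ∈ B ↔ y ∉ A :=
    ⟨fun hyB ↦ h.disjoint.symm.notMem_of_mem_left hyB, hy.resolve_left⟩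
  rcases hx with hx | hx
  · exact h.exists_isPath_length_eq_of_mem_left hx hy hxy (by tauto) hn hnk
  · have hxA : x ∉ A := h.disjoint.symm.notMem_of_mem_left hx
    rw [Set.union_comm] at hy ⊢
    exact h.symm.exists_isPath_length_eq_of_mem_left hx hy hxy (by tauto) hn hnk

lemma exists_isCycle_of_isEar (h : IsCodegreeBipartition G A B k) {q : G.Walk a b}
    (hq : IsEar (A ∪ B) q) (hpar : HasWrongParity A q) (hlen : q.length < 2 * k) :
    ∃ (v : V) (c : G.Walk v v), c.IsCycle ∧ c.length = 2 * k + 1 := by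
  have hq1 : 1 < q.length := h.one_lt_length_of_hasWrongParity hq.start_mem hq.end_mem hpar
  have hpar' : Odd (2 * k + 1 - q.length) ↔ ¬ (b ∈ A ↔ a ∈ A) := by
    have hqpar : Odd q.length ↔ (a ∈ A ↔ b ∈ A) := hpar
    rw [iff_comm (a := b ∈ A), ← hqpar, Nat.odd_sub (by lia), Nat.not_odd_iff_even]
    simp
  obtain ⟨p, hp, hpAB, hplen⟩ := h.exists_isPath_length_eq hq.end_mem hq.start_mem
    (hq.ne_of_hasWrongParity hpar).symm hpar' (by lia) (by lia)
  exact ⟨a, q.append p, hq.isCycle_append hp hpAB hq1, by rw [Walk.length_append]; lia⟩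

lemma of_induced_bipartite (hdisj : Disjoint A B)
    (hbip : ∀ u v, u ∈ A ∪ B → v ∈ A ∪ B → G.Adj u v → (u ∈ A ∧ v ∈ B) ∨ (u ∈ B ∧ v ∈ A))
    (hcommon : ∀ u v : V, ((u ∈ A ∧ v ∈ A) ∨ (u ∈ B ∧ v ∈ B)) →
      (k : ℕ∞) ≤ {w : V | w ∈ A ∪ B ∧ G.Adj u w ∧ G.Adj v w}.encard) :
    IsCodegreeBipartition G A B k := by
  have hAB : ∀ x ∈ A, x ∉ B := fun _ hx ↦ hdisj.notMem_of_mem_left hx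
  refine ⟨hdisj, ?_, ?_, ?_, ?_⟩
  · intro u hu v hv _ huv
    grind [hbip u v (.inl hu) (.inl hv) huv]
  · intro u hu v hv _ huv
    grind [hbip u v (.inr hu) (.inr hv) huv]
  · refine fun u hu v hv ↦ (hcommon u v (.inl ⟨hu, hv⟩)).trans (Set.encard_mono ?_)
    rintro w ⟨hw, huw, hvw⟩
    exact ⟨by grind [hbip u w (.inl hu) hw huw], huw, hvw⟩
  · refine fun u hu v hv ↦ (hcommon u v (.inr ⟨hu, hv⟩)).trans (Set.encard_mono ?_)
    rintro w ⟨hw, huw, hvw⟩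
    exact ⟨by grind [hbip u w (.inr hu) hw huw], huw, hvw⟩

end IsCodegreeBipartition

theorem stmt10_general {V : Type*} (G : SimpleGraph V) (V₁ V₂ : Set V) (hdisj : Disjoint V₁ V₂)
    (k : ℕ)
    (hbip : ∀ u v, u ∈ V₁ ∪ V₂ → v ∈ V₁ ∪ V₂ → G.Adj u v →
      (u ∈ V₁ ∧ v ∈ V₂) ∨ (u ∈ V₂ ∧ v ∈ V₁))
    (hcommon : ∀ u v : V, ((u ∈ V₁ ∧ v ∈ V₁) ∨ (u ∈ V₂ ∧ v ∈ V₂)) →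
      (k : ℕ∞) ≤ {w : V | w ∈ V₁ ∪ V₂ ∧ G.Adj u w ∧ G.Adj v w}.encard)
    (hcycle : ∃ (z : V) (c : G.Walk z z), c.IsCycle ∧ Odd c.length ∧ c.length ≤ 2 * k + 1 ∧
      ∃ u ∈ V₁ ∪ V₂, ∃ v ∈ V₁ ∪ V₂, u ≠ v ∧ u ∈ c.support ∧ v ∈ c.support) :
    ∃ (v : V) (c : G.Walk v v), c.IsCycle ∧ c.length = 2 * k + 1 := by
  obtain ⟨z, c, hc, hodd, hle, u, hu, v, hv, huv, huc, hvc⟩ := hcycle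
  rcases hle.eq_or_lt with hlen | hlt
  · exact ⟨z, c, hc, hlen⟩
  obtain ⟨x, y, q, hq, hpar, hqc⟩ :=
    exists_isEar_hasWrongParity_of_isCycle hc hodd huv hu hv huc hvc V₁
  have hV := IsCodegreeBipartition.of_induced_bipartite hdisj hbip hcommon
  exact hV.exists_isCycle_of_isEar hq hpar (by lia)

/-- If `G` has an induced bipartite subgraph on `V₁ ∪ V₂` in which same-part vertices have
more than `k` common neighbors, different-part vertices are joined by paths of every even
order `2l` (`2 ≤ l ≤ k`), and `G` has a `C₅` meeting both `V₁` and `V₂`, then `G` contains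
a cycle of length `2k+1`. -/
theorem stmt10 {V : Type*} [Fintype V] [DecidableEq V] (G : SimpleGraph V)
    (V₁ V₂ : Set V) (hdisj : Disjoint V₁ V₂) (k : ℕ) (hk : 2 ≤ k)
    (hbip : ∀ u v, u ∈ V₁ ∪ V₂ → v ∈ V₁ ∪ V₂ → G.Adj u v →
      (u ∈ V₁ ∧ v ∈ V₂) ∨ (u ∈ V₂ ∧ v ∈ V₁))
    (hcommon : ∀ u v : V, ((u ∈ V₁ ∧ v ∈ V₁) ∨ (u ∈ V₂ ∧ v ∈ V₂)) →
      k < {w : V | w ∈ V₁ ∪ V₂ ∧ G.Adj u w ∧ G.Adj v w}.ncard)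
    (hpaths : ∀ v₁ ∈ V₁, ∀ v₂ ∈ V₂, ∀ l : ℕ, 2 ≤ l → l ≤ k →
      ∃ p : G.Walk v₁ v₂, p.IsPath ∧ (∀ x ∈ p.support, x ∈ V₁ ∪ V₂) ∧ p.length + 1 = 2 * l)
    (hC5 : ∃ (z : V) (c : G.Walk z z), c.IsCycle ∧ c.length = 5 ∧
      (∃ u ∈ V₁, u ∈ c.support) ∧ (∃ v ∈ V₂, v ∈ c.support)) :
    ∃ (v : V) (c : G.Walk v v), c.IsCycle ∧ c.length = 2 * k + 1 := by
  obtain ⟨z, c, hc, hlen, ⟨u, hu, huc⟩, ⟨v, hv, hvc⟩⟩ := hC5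
  exact stmt10_general G V₁ V₂ hdisj k hbip
    (fun u v h ↦ (Nat.cast_le.2 (hcommon u v h).le).trans (Set.ncard_le_encard _))
    ⟨z, c, hc, by simp [hlen, Nat.odd_iff], by lia, u, .inl hu, v, .inr hv,
      hdisj.ne_of_mem hu hv, huc, hvc⟩
end

section
/- Let G be a non-bipartite connected graph of sufficiently large order n with minimum degree δ(G) ≥ n/3. Then G contains a cycle of length t for every integer t with 4 ≤ t ≤ δ(G) + 1. -/
open SimpleGraph

/-!
Call two vertices linked if they have many common neighbours. Minimum degree at least `n / 3` forces
a linked pair among any four vertices, and such pairs can be strung together to paths of every short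
even length; this gives all short even cycles. If a short odd cycle of length at least five is
missing, linked vertices lie on the same side of what turns out to be a bipartition of the whole
graph.

A long cycle `C` of length less than `δ` is lengthened by two. Two outside vertices with many
neighbours on `C` can be inserted one after the other. Otherwise the graph outside `C` again has
linked pairs among any seven vertices: if many vertices of `C` have several neighbours outside, two
of them at a short even distance on `C` are joined by a detour through the outside; if not, `C` is
almost a clique, and a chord lets the cycle be rerouted through the outside.
-/

section CycleLists

variable {V : Type*} {G : SimpleGraph V} {l q : List V} {i j : ℕ}

theorem isChain_cons_concat {R : V → V → Prop} {x a b y : V} (hxa : R x a)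
    (h : (a :: (q ++ [b])).IsChain R) (hby : R b y) :
    (x :: (a :: (q ++ [b]) ++ [y])).IsChain R := by
  have hq : (x :: a :: (q ++ [b])).IsChain R := List.isChain_cons_cons.2 ⟨hxa, h⟩
  have : (x :: a :: q ++ b :: [y]).IsChain R := List.isChain_split.2 ⟨by simpa using hq, by simpa⟩
  simpa using this

/-- The vertices of a cycle of `G`, listed without repetition in the order in which the cycle visits
them. Surgery on cycles is done by cutting and pasting such lists. -/
structure IsCycleList (G : SimpleGraph V) (l : List V) : Prop where
  nodup : l.Nodup
  three_le_length : 3 ≤ l.length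
  isChain : l.IsChain G.Adj
  adj_getLast_head : ∀ h : l ≠ [], G.Adj (l.getLast h) (l.head h)

/-- `G` contains a cycle of length `t`. -/
def HasCycle (G : SimpleGraph V) (t : ℕ) : Prop :=
  ∃ l, IsCycleList G l ∧ l.length = t

theorem hasCycle_of_isChain {x y : V} (hnodup : (x :: (q ++ [y])).Nodup) (hq : q ≠ [])
    (hchain : (x :: (q ++ [y])).IsChain G.Adj) (hyx : G.Adj y x) : HasCycle G (q.length + 2) := by
  have hlength : (x :: (q ++ [y])).length = q.length + 2 := by simp
  have := List.length_pos_iff.2 hq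
  exact ⟨_, ⟨hnodup, by omega, hchain, fun _ ↦ by simpa using hyx⟩, hlength⟩

theorem HasCycle.exists_isCycle {t : ℕ} (h : HasCycle G t) :
    ∃ (v : V) (c : G.Walk v v), c.IsCycle ∧ c.length = t := by
  obtain ⟨l, h, rfl⟩ := h
  have hne : l ≠ [] := List.ne_nil_of_length_pos (by have := h.three_le_length; omega)
  have hlength : (Walk.ofSupport l hne h.isChain).length + 1 = l.length := by
    rw [← Walk.length_support, Walk.support_ofSupport]
  refine ⟨_, .cons (h.adj_getLast_head hne) (.ofSupport l hne h.isChain), ?_, hlength⟩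
  rw [Walk.isCycle_iff_isPath_tail_and_le_length, Walk.isPath_def]
  have := h.three_le_length
  exact ⟨by simpa using h.nodup, by simp only [Walk.length_cons]; omega⟩

/-- Replacement of the entries of `l` strictly between positions `i` and `j` by the list `q`. -/
def detour (l q : List V) (i j : ℕ) : List V :=
  l.take (i + 1) ++ (q ++ l.drop j)

theorem length_detour_add (hij : i < j) (hj : j < l.length) :
    (detour l q i j).length + j = l.length + q.length + i + 1 := by
  simp only [detour, List.length_append, List.length_take, List.length_drop]
  omega

theorem isChain_detour {R : V → V → Prop} (h : l.IsChain R) (hi : i < l.length) (hj : j < l.length)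
    (hq : (l[i] :: (q ++ [l[j]])).IsChain R) : (detour l q i j).IsChain R := by
  have hleft : (l.take i ++ [l[i]]).IsChain R := by
    rw [List.take_append_getElem]
    exact h.take _
  have hright : (l[j] :: l.drop (j + 1)).IsChain R := by
    rw [← List.drop_eq_getElem_cons]
    exact h.drop _
  rw [detour, ← List.take_append_getElem hi, List.append_assoc, List.singleton_append,
    List.isChain_split, List.drop_eq_getElem_cons hj, ← List.cons_append]
  exact ⟨hleft, List.isChain_split.2 ⟨hq, hright⟩⟩

theorem nodup_detour (h : l.Nodup) (hij : i < j) (hq : q.Nodup)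
    (hdisj : ∀ v ∈ q, v ∉ l.take (i + 1) ∧ v ∉ l.drop j) : (detour l q i j).Nodup := by
  have hends : (l.take (i + 1) ++ l.drop j).Nodup :=
    h.sublist (by simpa using (List.drop_sublist_drop_left l hij).append_left (l.take (i + 1)))
  rw [detour]
  grind [List.nodup_append]

theorem IsCycleList.detour (h : IsCycleList G l) (hij : i < j) (hj : j < l.length) (hne : q ≠ [])
    (hchain : (l[i] :: (q ++ [l[j]])).IsChain G.Adj) (hq : q.Nodup)
    (hdisj : ∀ v ∈ q, v ∉ l.take (i + 1) ∧ v ∉ l.drop j) : IsCycleList G (detour l q i j) where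
  nodup := nodup_detour h.nodup hij hq hdisj
  three_le_length := by
    have := List.length_pos_iff.2 hne
    simp only [_root_.detour, List.length_append, List.length_take, List.length_drop]
    omega
  isChain := isChain_detour h.isChain (by omega) hj hchain
  adj_getLast_head _ := by
    have hl : l ≠ [] := List.ne_nil_of_length_pos (by omega)
    have := h.adj_getLast_head hl
    have hdrop : l.drop j ≠ [] := by simpa using hj
    simpa [_root_.detour, List.head_append, List.getLast_append, hl, hdrop, hj.not_ge,
      List.head_take] using this

/-- The list obtained from `l` by jumping from position `i` through `q` to position `j`, running
backwards to position `i + p + 1`, and jumping from there to position `j + 1`; the `p` entries after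
position `i` are left out. -/
def crossing (l q : List V) (i p j : ℕ) : List V :=
  detour l (q ++ ((l.take (j + 1)).drop (i + p + 1)).reverse) i (j + 1)

theorem length_crossing_add {p : ℕ} (hij : i + p < j) (hj : j + 1 < l.length) :
    (crossing l q i p j).length + p = l.length + q.length := by
  have := length_detour_add (q := q ++ ((l.take (j + 1)).drop (i + p + 1)).reverse)
    (show i < j + 1 by omega) hj
  simp only [List.length_append, List.length_reverse, List.length_drop, List.length_take] at this
  rw [crossing]
  omega

theorem isChain_append_reverse_concat {s : List V} {x y z w : V}
    (hq : (x :: (q ++ [y])).IsChain G.Adj) (hs : s.IsChain G.Adj) (hlast : s.getLast? = some y)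
    (hhead : s.head? = some z) (hzw : G.Adj z w) :
    (x :: (q ++ s.reverse ++ [w])).IsChain G.Adj := by
  have hreverse : (s.reverse ++ [w]).IsChain G.Adj := by
    refine List.isChain_append.2 ⟨List.isChain_reverse.2 (hs.imp fun _ _ ↦ Adj.symm), by simp, ?_⟩
    simpa [hhead] using hzw
  obtain ⟨s, rfl⟩ := List.getLast?_eq_some_iff.1 hlast
  have := (List.isChain_split (l₁ := x :: q) (l₂ := s.reverse ++ [w])).2
    ⟨by simpa using hq, by simpa using hreverse⟩
  simpa using this

theorem IsCycleList.crossing {p : ℕ} (h : IsCycleList G l) (hij : i + p < j)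
    (hj : j + 1 < l.length) (hne : q ≠ []) (hchain : (l[i] :: (q ++ [l[j]])).IsChain G.Adj)
    (hq : q.Nodup) (hdisj : ∀ v ∈ q, v ∉ l) (hadj : G.Adj l[i + p + 1] l[j + 1]) :
    IsCycleList G (crossing l q i p j) := by
  set s := (l.take (j + 1)).drop (i + p + 1)
  have hs_subset : s ⊆ l := fun _ hv ↦ List.mem_of_mem_take (List.mem_of_mem_drop hv)
  have hs_nodup : s.Nodup := (h.nodup.take).drop
  have hs_take : ∀ v ∈ s, v ∉ l.take (i + 1) := by
    intro v hv hv'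
    have := List.disjoint_take_drop h.nodup (show i + 1 ≤ i + p + 1 by omega)
    exact this hv' (((List.take_sublist _ _).drop _).subset hv)
  have hs_drop : ∀ v ∈ s, v ∉ l.drop (j + 1) := fun v hv ↦
    List.disjoint_take_drop h.nodup le_rfl (List.mem_of_mem_drop hv)
  refine h.detour (by omega) hj (by simp [hne]) ?_ ?_ ?_
  · refine isChain_append_reverse_concat hchain ((h.isChain.take _).drop _) ?_ ?_ hadj
    · grind [List.getLast?_drop, List.getLast?_take]
    · grind [List.head?_drop]
  · grind [List.nodup_append, List.nodup_reverse]
  · simp only [List.mem_append, List.mem_reverse]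
    rintro v (hv | hv)
    · exact ⟨fun h ↦ hdisj v hv (List.mem_of_mem_take h),
        fun h ↦ hdisj v hv (List.mem_of_mem_drop h)⟩
    · exact ⟨hs_take v hv, hs_drop v hv⟩

variable [DecidableEq V]

theorem toFinset_detour_succ : (detour l q i (i + 1)).toFinset = q.toFinset ∪ l.toFinset := by
  rw [detour]
  ext v
  conv_rhs => rw [← List.take_append_drop (i + 1) l]
  simp only [List.toFinset_append, Finset.mem_union]
  tauto

theorem toFinset_crossing_zero (hij : i ≤ j) :
    (crossing l q i 0 j).toFinset = q.toFinset ∪ l.toFinset := by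
  have hsplit : l.take (j + 1) = l.take (i + 1) ++ (l.take (j + 1)).drop (i + 1) := by
    conv_lhs => rw [← List.take_append_drop (i + 1) (l.take (j + 1))]
    rw [List.take_take, min_eq_left (by omega)]
  ext v
  conv_rhs => rw [← List.take_append_drop (j + 1) l, hsplit]
  simp only [crossing, detour, add_zero, List.toFinset_append, List.toFinset_reverse,
    Finset.mem_union]
  tauto

/-- `C` is the vertex set of a cycle of `G`. -/
def HasCycleOn (G : SimpleGraph V) (C : Finset V) : Prop :=
  ∃ l, IsCycleList G l ∧ l.toFinset = C

theorem IsCycleList.card_toFinset (h : IsCycleList G l) : l.toFinset.card = l.length :=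
  List.toFinset_card_of_nodup h.nodup

theorem HasCycleOn.hasCycle {C : Finset V} (h : HasCycleOn G C) : HasCycle G C.card := by
  obtain ⟨l, hl, rfl⟩ := h
  exact ⟨l, hl, hl.card_toFinset.symm⟩

theorem IsCycleList.hasCycleOn (h : IsCycleList G l) : HasCycleOn G l.toFinset :=
  ⟨l, h, rfl⟩

theorem IsCycleList.hasCycleOn_insert_of_adj_of_adj (h : IsCycleList G l) (hi : i + 1 < l.length)
    {z : V} (hz : z ∉ l) (hzi : G.Adj z l[i]) (hzi' : G.Adj z l[i + 1]) :
    HasCycleOn G (insert z l.toFinset) := by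
  have hdisj : z ∉ l.take (i + 1) ∧ z ∉ l.drop (i + 1) :=
    ⟨fun h ↦ hz (List.mem_of_mem_take h), fun h ↦ hz (List.mem_of_mem_drop h)⟩
  exact ⟨_, h.detour (q := [z]) i.lt_succ_self hi (by simp) (by simp [hzi.symm, hzi']) (by simp)
    (by simpa using hdisj), toFinset_detour_succ⟩

theorem IsCycleList.hasCycleOn_insert_of_crossing (h : IsCycleList G l) (hij : i < j)
    (hj : j + 1 < l.length) {z : V} (hz : z ∉ l) (hzi : G.Adj z l[i]) (hzj : G.Adj z l[j])
    (hadj : G.Adj l[i + 1] l[j + 1]) : HasCycleOn G (insert z l.toFinset) :=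
  ⟨_, h.crossing (q := [z]) (p := 0) hij hj (by simp) (by simp [hzi.symm, hzj]) (by simp)
    (by simpa using hz) hadj, toFinset_crossing_zero hij.le⟩

end CycleLists

section Linked

open Finset

variable {V : Type*} [Fintype V] [DecidableEq V] {G : SimpleGraph V} [DecidableRel G.Adj]
  {O : Finset V} {L m k : ℕ}

/-- `a` and `b` have at least `L` common neighbours inside `O`. -/
def Linked (G : SimpleGraph V) [DecidableRel G.Adj] (O : Finset V) (L : ℕ) (a b : V) : Prop :=
  L ≤ #((G.neighborFinset a ∩ G.neighborFinset b) ∩ O)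

instance (a : V) : DecidablePred (Linked G O L a) :=
  fun _ ↦ inferInstanceAs (Decidable (_ ≤ _))

theorem linked_univ_iff {a b : V} :
    Linked G univ L a b ↔ L ≤ #(G.neighborFinset a ∩ G.neighborFinset b) := by
  rw [Linked, inter_univ]

theorem Linked.symm {a b : V} (h : Linked G O L a b) : Linked G O L b a := by
  rwa [Linked, inter_comm (G.neighborFinset b)]

theorem Linked.exists_adj_adj_notMem {a b : V} {S : Finset V} (h : Linked G O L a b) (hS : #S < L) :
    ∃ c ∈ O, c ∉ S ∧ G.Adj a c ∧ G.Adj b c := by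
  obtain ⟨c, hc, hcS⟩ := exists_mem_notMem_of_card_lt_card (hS.trans_le h)
  simp only [mem_inter, mem_neighborFinset] at hc
  exact ⟨c, hc.2, hcS, hc.1⟩

/-- Among any `m` vertices of `O`, two are linked inside `O`. -/
def HasLinkedPairs (G : SimpleGraph V) [DecidableRel G.Adj] (O : Finset V) (m L : ℕ) : Prop :=
  ∀ T ⊆ O, #T = m → ∃ a ∈ T, ∃ b ∈ T, a ≠ b ∧ Linked G O L a b

theorem sum_card_le_card_biUnion_add {ι α : Type*} [DecidableEq α]
    (f : ι → Finset α) (T : Finset ι) (h : ∀ a ∈ T, ∀ b ∈ T, a ≠ b → #(f a ∩ f b) ≤ L) :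
    ∑ a ∈ T, #(f a) ≤ #(T.biUnion f) + #T * #T * L := by
  classical
  induction T using Finset.induction_on with
  | empty => simp
  | insert a T ha ih =>
    have ih := ih fun b hb c hc ↦ h b (mem_insert_of_mem hb) c (mem_insert_of_mem hc)
    have hinter : #(f a ∩ T.biUnion f) ≤ #T * L := by
      rw [inter_biUnion]
      exact card_biUnion_le_card_mul _ _ _ fun b hb ↦
        h a (mem_insert_self _ _) b (mem_insert_of_mem hb) (ne_of_mem_of_not_mem hb ha).symm
    have hunion := card_union_add_card_inter (f a) (T.biUnion f)
    rw [sum_insert ha, biUnion_insert, card_insert_of_notMem ha]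
    nlinarith

theorem hasLinkedPairs_of_le_card_inter {d : ℕ} (hd : ∀ v ∈ O, d ≤ #(G.neighborFinset v ∩ O))
    (hO : #O + m * m * L < m * d) : HasLinkedPairs G O m L := by
  intro T hTO hT
  by_contra! hunlinked
  have hcount := sum_card_le_card_biUnion_add (L := L) (fun v ↦ G.neighborFinset v ∩ O) T
    fun a ha b hb hab ↦ by
      rw [← inter_inter_distrib_right]
      exact (not_le.1 (hunlinked a ha b hb hab)).le
  have hsum : #T * d ≤ ∑ v ∈ T, #(G.neighborFinset v ∩ O) :=
    card_nsmul_le_sum _ _ _ fun v hv ↦ hd v (hTO hv)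
  have hunion : #(T.biUnion fun v ↦ G.neighborFinset v ∩ O) ≤ #O :=
    card_le_card (biUnion_subset.2 fun v _ ↦ inter_subset_right)
  subst hT
  omega

theorem HasLinkedPairs.exists_linked_of_le_card (hP : HasLinkedPairs G O m L) {S : Finset V}
    (hSO : S ⊆ O) (hS : m ≤ #S) : ∃ a ∈ S, ∃ b ∈ S, a ≠ b ∧ Linked G O L a b := by
  obtain ⟨T, hTS, hT⟩ := exists_subset_card_eq hS
  obtain ⟨a, ha, b, hb, hab, hlinked⟩ := hP T (hTS.trans hSO) hT
  exact ⟨a, hTS ha, b, hTS hb, hab, hlinked⟩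

-- Two of the common neighbours of the ends are again linked, so the path grows from its middle.
theorem HasLinkedPairs.exists_path (hP : HasLinkedPairs G O m L) {z z' : V}
    (hlinked : Linked G O L z z') (S : Finset V) (hS : #S + 2 * k + m < L) :
    ∃ q : List V, q.length = 2 * k + 1 ∧ q.Nodup ∧ (z :: (q ++ [z'])).IsChain G.Adj ∧
      ∀ v ∈ q, v ∈ O ∧ v ∉ S ∧ v ≠ z ∧ v ≠ z' := by
  induction k generalizing S z z' with
  | zero =>
    obtain ⟨c, hcO, hcS, hzc, hzc'⟩ := hlinked.exists_adj_adj_notMem (show #S < L by omega)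
    exact ⟨[c], by simp, by simp, by simp [hzc, hzc'.symm],
      by simpa using ⟨hcO, hcS, hzc.ne', hzc'.ne'⟩⟩
  | succ k ih =>
    set N := ((G.neighborFinset z ∩ G.neighborFinset z') ∩ O) \ S with hN
    have hmem : ∀ v ∈ N, G.Adj z v ∧ G.Adj z' v ∧ v ∈ O ∧ v ∉ S := by simp [hN, and_assoc]
    have hcard : m ≤ #N := by
      have := le_card_sdiff S ((G.neighborFinset z ∩ G.neighborFinset z') ∩ O)
      rw [Linked] at hlinked
      rw [hN]
      omega
    obtain ⟨a, ha, b, hb, hab, hab_linked⟩ :=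
      hP.exists_linked_of_le_card (fun v hv ↦ (hmem v hv).2.2.1) hcard
    have hS' : #(S ∪ {z, z'}) ≤ #S + 2 := (card_union_le _ _).trans (by gcongr; exact card_le_two)
    obtain ⟨q, hlength, hnodup, hchain, hq⟩ := ih hab_linked (S ∪ {z, z'}) (by omega)
    obtain ⟨hza, hza', haO, haS⟩ := hmem a ha
    obtain ⟨hzb, hzb', hbO, hbS⟩ := hmem b hb
    have := hza.ne; have := hza'.ne; have := hzb.ne; have := hzb'.ne
    refine ⟨a :: (q ++ [b]), by simp [hlength]; omega, by grind [List.nodup_append],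
      isChain_cons_concat hza hchain hzb'.symm, by grind⟩

theorem HasLinkedPairs.hasCycle_even (hP : HasLinkedPairs G univ m L) (hm : m ≤ Fintype.card V)
    (hk : 2 * k + m + 1 < L) : HasCycle G (2 * k + 4) := by
  obtain ⟨a, -, b, -, hab, hlinked⟩ := hP.exists_linked_of_le_card (subset_univ univ) (by simpa)
  obtain ⟨c, -, -, hac, hbc⟩ := hlinked.exists_adj_adj_notMem (S := ∅) (by simp; omega)
  obtain ⟨q, hlength, hnodup, hchain, hq⟩ :=
    hP.exists_path (k := k) hlinked {c} (by rw [card_singleton]; omega)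
  have := hac.ne; have := hbc.ne
  have hcycle : HasCycle G ((a :: q).length + 2) :=
    hasCycle_of_isChain (x := c) (y := b) (by grind [List.nodup_append]) (by simp)
      (by simpa [hac.symm] using hchain) hbc
  convert hcycle using 1
  simp only [List.length_cons]
  omega

theorem HasLinkedPairs.hasCycle_of_linked_of_adj (hP : HasLinkedPairs G univ m L) {p q : V}
    (hlinked : Linked G univ L p q) (hadj : G.Adj p q) (hk : 2 * k + m < L) :
    HasCycle G (2 * k + 3) := by
  obtain ⟨r, hlength, hnodup, hchain, hr⟩ := hP.exists_path (k := k) hlinked ∅ (by simpa)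
  have hne : r ≠ [] := List.ne_nil_of_length_pos (by omega)
  have := hadj.ne
  simpa [hlength] using hasCycle_of_isChain (by grind [List.nodup_append]) hne hchain hadj.symm

theorem HasLinkedPairs.hasCycle_of_linked_of_linked_of_adj (hP : HasLinkedPairs G univ m L)
    {v p q : V} (hp : Linked G univ L v p) (hq : Linked G univ L v q) (hadj : G.Adj p q)
    (hk : 2 * k + m + 2 < L) : HasCycle G (2 * k + 5) := by
  obtain rfl | hvp := eq_or_ne v p
  · exact hP.hasCycle_of_linked_of_adj (k := k + 1) hq hadj (by omega)
  obtain rfl | hvq := eq_or_ne v q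
  · exact hP.hasCycle_of_linked_of_adj (k := k + 1) hp hadj.symm (by omega)
  obtain ⟨c, -, hcq, hvc, hpc⟩ := hp.exists_adj_adj_notMem (S := {q}) (by simp; omega)
  obtain ⟨r, hlength, hnodup, hchain, hr⟩ := hP.exists_path (k := k) hq {p, c} (by
    have := card_le_two (a := p) (b := c)
    omega)
  have := hadj.ne; have := hvc.ne; have := hpc.ne
  have hcycle : HasCycle G ((c :: v :: r).length + 2) :=
    hasCycle_of_isChain (x := p) (y := q) (by grind [List.nodup_append]) (by simp)
      (by simpa [hpc, hvc.symm] using hchain) hadj.symm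
  convert hcycle using 1
  simp only [List.length_cons]
  omega

theorem HasLinkedPairs.hasCycle_of_adj_of_linked_neighbors (hP : HasLinkedPairs G univ m L)
    {x y a b : V} (hxy : G.Adj x y) (hxa : G.Adj x a) (hyb : G.Adj y b) (hab : a ≠ b) (hay : a ≠ y)
    (hbx : b ≠ x) (hlinked : Linked G univ L a b) (hk : 2 * k + m + 2 < L) :
    HasCycle G (2 * k + 5) := by
  obtain ⟨r, hlength, hnodup, hchain, hr⟩ := hP.exists_path (k := k) hlinked {x, y} (by
    have := card_le_two (a := x) (b := y)
    omega)
  have := hxy.ne; have := hxa.ne; have := hyb.ne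
  have hnodup' : (x :: (a :: (r ++ [b]) ++ [y])).Nodup := by
    simp only [List.nodup_cons, List.nodup_append, List.mem_append, List.cons_append, List.mem_cons]
    grind
  have hcycle : HasCycle G ((a :: (r ++ [b])).length + 2) :=
    hasCycle_of_isChain hnodup' (by simp)
      (isChain_cons_concat hxa hchain hyb.symm) hxy.symm
  convert hcycle using 1
  simp only [List.length_cons, List.length_append, List.length_nil]
  omega

end Linked

/-! ### Short cycles -/

section ShortCycles

open Finset

variable {V : Type*} {G : SimpleGraph V}

theorem isIndepSet_of_forall_not_adj {s : Set V} (h : ∀ a ∈ s, ∀ b ∈ s, ¬G.Adj a b) :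
    G.IsIndepSet s :=
  fun a ha b hb _ ↦ h a ha b hb

theorem colorable_two_of_isIndepSet_of_isIndepSet_compl {s : Set V} (hs : G.IsIndepSet s)
    (hs' : G.IsIndepSet sᶜ) : G.Colorable 2 := by
  refine IsBipartiteWith.isBipartite (s := s) (t := sᶜ) ⟨disjoint_compl_right, fun v w hvw ↦ ?_⟩
  have hnot_both : ¬(v ∈ s ∧ w ∈ s) := fun h ↦ hs h.1 h.2 hvw.ne hvw
  have hnot_none : ¬(v ∈ sᶜ ∧ w ∈ sᶜ) := fun h ↦ hs' h.1 h.2 hvw.ne hvw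
  simp only [Set.mem_compl_iff] at hnot_none ⊢
  tauto

variable [Fintype V] [DecidableEq V] [DecidableRel G.Adj] {L m : ℕ}

theorem card_mul_minDegree_le_card_compl_mul {I : Finset V} (hI : G.IsIndepSet (I : Set V)) {D : ℕ}
    (hD : ∀ v, G.degree v ≤ D) : #I * G.minDegree ≤ #Iᶜ * D := by
  refine card_mul_le_card_mul G.Adj (fun a ha ↦ ?_) (fun b _ ↦ ?_)
  · refine (G.minDegree_le_degree a).trans (card_le_card fun b hb ↦ ?_)
    rw [mem_neighborFinset] at hb
    rw [bipartiteAbove, mem_filter, mem_compl]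
    exact ⟨fun hbI ↦ hI ha hbI hb.ne hb, hb⟩
  · refine le_trans (card_le_card fun a ha ↦ ?_) (hD b)
    rw [bipartiteBelow, mem_filter] at ha
    exact (G.mem_neighborFinset b a).2 ha.2.symm

theorem card_neighborFinset_inter_lt {a b : V} (h : ¬Linked G univ L a b) :
    #(G.neighborFinset a ∩ G.neighborFinset b) < L := by
  rwa [linked_univ_iff, not_le] at h

theorem degree_add_degree_add_degree_le {a b c : V} (hab : ¬Linked G univ L a b)
    (hac : ¬Linked G univ L a c) (hbc : ¬Linked G univ L b c) :
    G.degree a + G.degree b + G.degree c ≤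
      #(G.neighborFinset a ∪ (G.neighborFinset b ∪ G.neighborFinset c)) + 3 * L := by
  have hab := card_neighborFinset_inter_lt hab
  have hac := card_neighborFinset_inter_lt hac
  have hbc := card_neighborFinset_inter_lt hbc
  have hunion := card_union_add_card_inter (G.neighborFinset b) (G.neighborFinset c)
  have hunion' := card_union_add_card_inter (G.neighborFinset a)
    (G.neighborFinset b ∪ G.neighborFinset c)
  have hinter := card_union_le (G.neighborFinset a ∩ G.neighborFinset b)
    (G.neighborFinset a ∩ G.neighborFinset c)
  rw [← inter_union_distrib_left] at hinter
  simp only [← card_neighborFinset_eq_degree]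
  omega

theorem hasLinkedPairs_univ (hm : Fintype.card V + m * m * L < m * G.minDegree) :
    HasLinkedPairs G univ m L :=
  hasLinkedPairs_of_le_card_inter (fun v _ ↦ by simpa using G.minDegree_le_degree v) (by simpa)

/-- What the absence of a single short odd cycle forces upon a graph of minimum degree at least a
third of its order: linked vertices behave as if they lay on the same side of a bipartition. -/
structure BipartiteLike (G : SimpleGraph V) [DecidableRel G.Adj] (L : ℕ) : Prop where
  pos : 0 < L
  mul_le_minDegree : 1000 * L ≤ G.minDegree
  card_le : Fintype.card V ≤ 3 * G.minDegree
  not_adj_of_linked : ∀ {v p q}, Linked G univ L v p → Linked G univ L v q → ¬G.Adj p q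
  not_linked_of_adj_adj_adj : ∀ {x y a b}, G.Adj x y → G.Adj x a → G.Adj y b → a ≠ b → a ≠ y →
    b ≠ x → ¬Linked G univ L a b

/-- The vertices linked to `v`. -/
def linkClass (G : SimpleGraph V) [DecidableRel G.Adj] (L : ℕ) (v : V) : Finset V :=
  {u | Linked G univ L v u}

theorem mem_linkClass {u v : V} : u ∈ linkClass G L v ↔ Linked G univ L v u := by
  simp [linkClass]

namespace BipartiteLike

variable {a b c u v w x y : V}

theorem isIndepSet_linkClass (h : BipartiteLike G L) (v : V) :
    G.IsIndepSet (linkClass G L v : Set V) :=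
  isIndepSet_of_forall_not_adj fun _ ha _ hb ↦
    h.not_adj_of_linked (mem_linkClass.1 ha) (mem_linkClass.1 hb)

theorem linked_self (h : BipartiteLike G L) (v : V) : Linked G univ L v v := by
  rw [linked_univ_iff, inter_self, card_neighborFinset_eq_degree]
  have := h.mul_le_minDegree
  have := G.minDegree_le_degree v
  omega

theorem not_linked_of_adj (h : BipartiteLike G L) (hab : G.Adj a b) : ¬Linked G univ L a b :=
  fun hlinked ↦ h.not_adj_of_linked (h.linked_self a) hlinked hab

-- Four pairwise unlinked vertices would have almost disjoint neighbourhoods.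
theorem linked_or_linked_or_linked (h : BipartiteLike G L) (hab : ¬Linked G univ L a b)
    (hac : ¬Linked G univ L a c) (hbc : ¬Linked G univ L b c) (v : V) :
    Linked G univ L a v ∨ Linked G univ L b v ∨ Linked G univ L c v := by
  by_contra! ⟨hav, hbv, hcv⟩
  have hne : ∀ {p q}, ¬Linked G univ L p q → p ≠ q := fun hpq ↦ by
    rintro rfl
    exact hpq (h.linked_self _)
  have := hne hab; have := hne hac; have := hne hbc
  have := hne hav; have := hne hbv; have := hne hcv
  have hP : HasLinkedPairs G univ 4 L := hasLinkedPairs_univ (by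
    have := h.pos; have := h.mul_le_minDegree; have := h.card_le
    omega)
  have hex := hP {a, b, c, v} (subset_univ _)
    (by rw [card_insert_of_notMem, card_insert_of_notMem, card_pair] <;> simp [*])
  simp only [mem_insert, mem_singleton, exists_eq_or_imp, exists_eq_left] at hex
  simp [hab, hac, hbc, hav, hbv, hcv, mt Linked.symm hab, mt Linked.symm hac, mt Linked.symm hbc,
    mt Linked.symm hav, mt Linked.symm hbv, mt Linked.symm hcv] at hex

theorem exists_adj_notMem (h : BipartiteLike G L) (x : V) {S : Finset V} (hS : #S < 1000) :
    ∃ a, G.Adj x a ∧ a ∉ S := by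
  have hcard : #S < #(G.neighborFinset x) := by
    have := h.pos; have := h.mul_le_minDegree; have := G.minDegree_le_degree x
    rw [card_neighborFinset_eq_degree]
    omega
  simpa using exists_mem_notMem_of_card_lt_card hcard

theorem not_adj_of_adj_adj (h : BipartiteLike G L) (hxy : G.Adj x y) (hxc : G.Adj x c) :
    ¬G.Adj y c := by
  intro hyc
  obtain ⟨a, hxa, ha⟩ := h.exists_adj_notMem x (S := {y, c}) (card_le_two.trans_lt (by norm_num))
  obtain ⟨b, hyb, hb⟩ := h.exists_adj_notMem y (S := {x, c, a})
    (card_le_three.trans_lt (by norm_num))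
  obtain ⟨e, hce, he⟩ := h.exists_adj_notMem c (S := {x, y, a, b})
    (card_le_four.trans_lt (by norm_num))
  simp only [mem_insert, mem_singleton, not_or] at ha hb he
  have hca : ¬Linked G univ L c a :=
    h.not_linked_of_adj_adj_adj hxy.symm hyc hxa (Ne.symm ha.2) hxc.ne' ha.1
  have hcb : ¬Linked G univ L c b :=
    h.not_linked_of_adj_adj_adj hxy hxc hyb (Ne.symm hb.2.1) hyc.ne' hb.1
  have hab : ¬Linked G univ L a b :=
    h.not_linked_of_adj_adj_adj hxy hxa hyb (Ne.symm hb.2.2) ha.1 hb.1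
  rcases h.linked_or_linked_or_linked hca hcb hab e with hlinked | hlinked | hlinked
  · exact h.not_linked_of_adj hce hlinked
  · exact h.not_linked_of_adj_adj_adj hxc hxa hce (Ne.symm he.2.2.1) ha.2 he.1 hlinked
  · exact h.not_linked_of_adj_adj_adj hyc hyb hce (Ne.symm he.2.2.2) hb.2.1 he.2.1 hlinked

theorem not_linked_of_adj_of_adj (h : BipartiteLike G L) (hxy : G.Adj x y) (hxa : G.Adj x a)
    (hyb : G.Adj y b) : ¬Linked G univ L a b := by
  obtain rfl | hab := eq_or_ne a b
  · exact absurd hyb (h.not_adj_of_adj_adj hxy hxa)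
  obtain rfl | hay := eq_or_ne a y
  · exact h.not_linked_of_adj hyb
  obtain rfl | hbx := eq_or_ne b x
  · exact h.not_linked_of_adj hxa.symm
  exact h.not_linked_of_adj_adj_adj hxy hxa hyb hab hay hbx

-- A vertex is *coherent* when its neighbours are pairwise linked. Adjacent incoherent vertices
-- would have four pairwise unlinked neighbours.
theorem colorable_two_or_exists_coherent_edge (h : BipartiteLike G L) :
    G.Colorable 2 ∨ ∃ x y, G.Adj x y ∧ (∀ a b, G.Adj x a → G.Adj x b → Linked G univ L a b) ∧
      ∀ a b, G.Adj y a → G.Adj y b → Linked G univ L a b := by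
  refine or_iff_not_imp_right.2 fun hno ↦ colorable_two_of_isIndepSet_of_isIndepSet_compl
    (s := {x | ∀ a b, G.Adj x a → G.Adj x b → Linked G univ L a b})
    (isIndepSet_of_forall_not_adj fun x hx y hy hxy ↦ hno ⟨x, y, hxy, hx, hy⟩)
    (isIndepSet_of_forall_not_adj fun x hx y hy hxy ↦ ?_)
  simp only [Set.mem_compl_iff, Set.mem_ofPred_eq, not_forall] at hx hy
  obtain ⟨a, a', hxa, hxa', haa'⟩ := hx
  obtain ⟨b, b', hyb, hyb', hbb'⟩ := hy
  rcases h.linked_or_linked_or_linked haa' (h.not_linked_of_adj_of_adj hxy hxa hyb)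
    (h.not_linked_of_adj_of_adj hxy hxa' hyb) b' with hlinked | hlinked | hlinked
  · exact h.not_linked_of_adj_of_adj hxy hxa hyb' hlinked
  · exact h.not_linked_of_adj_of_adj hxy hxa' hyb' hlinked
  · exact hbb' hlinked

theorem colorable_two_or_exists_not_linked (h : BipartiteLike G L) (x y : V) :
    G.Colorable 2 ∨ ∃ w, ¬Linked G univ L x w ∧ ¬Linked G univ L y w := by
  refine or_iff_not_imp_right.2 fun hno ↦ ?_
  push Not at hno
  refine colorable_two_of_isIndepSet_of_isIndepSet_compl (h.isIndepSet_linkClass x)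
    ((h.isIndepSet_linkClass y).mono fun w hw ↦ ?_)
  rw [Set.mem_compl_iff, mem_coe, mem_linkClass] at hw
  exact mem_coe.2 (mem_linkClass.2 (hno w hw))

theorem degree_le_of_not_linked (h : BipartiteLike G L) (hab : ¬Linked G univ L a b)
    (hac : ¬Linked G univ L a c) (hbc : ¬Linked G univ L b c) :
    G.degree a ≤ G.minDegree + 3 * L := by
  have := degree_add_degree_add_degree_le hab hac hbc
  have := card_le_univ (G.neighborFinset a ∪ (G.neighborFinset b ∪ G.neighborFinset c))
  have := h.card_le; have := G.minDegree_le_degree b; have := G.minDegree_le_degree c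
  omega

theorem colorable_two_or_degree_le (h : BipartiteLike G L) (u : V) :
    G.Colorable 2 ∨ G.degree u ≤ G.minDegree + 3 * L := by
  obtain ⟨p, hup, -⟩ := h.exists_adj_notMem u (S := ∅) (by simp)
  refine (h.colorable_two_or_exists_not_linked u p).imp_right fun ⟨w, huw, hpw⟩ ↦ ?_
  exact h.degree_le_of_not_linked (h.not_linked_of_adj hup) huw hpw

theorem colorable_two_of_isIndepSet (h : BipartiteLike G L) {I : Finset V}
    (hI : G.IsIndepSet (I : Set V)) (hcard : 2 * G.minDegree ≤ #I + 100 * L) : G.Colorable 2 := by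
  by_contra hcol
  have hcount := card_mul_minDegree_le_card_compl_mul hI fun v ↦
    (h.colorable_two_or_degree_le v).resolve_left hcol
  have := h.card_le; have := h.mul_le_minDegree; have := h.pos
  have hcompl : #Iᶜ ≤ G.minDegree + 100 * L := by
    have := card_add_card_compl I
    omega
  have := Nat.mul_le_mul_right (G.minDegree + 3 * L) hcompl
  have := Nat.mul_le_mul_right G.minDegree hcard
  nlinarith

theorem card_neighborFinset_sdiff_le (h : BipartiteLike G L) (hxy : G.Adj x y)
    (hxw : ¬Linked G univ L x w) (hyw : ¬Linked G univ L y w) (hxv : Linked G univ L x v)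
    (hwv : G.Adj w v) : #(G.neighborFinset x \ G.neighborFinset v) ≤ 20 * L := by
  have hxy' := h.not_linked_of_adj hxy
  have hyv : #(G.neighborFinset y ∩ G.neighborFinset v) < L :=
    card_neighborFinset_inter_lt fun hyv ↦ h.not_adj_of_linked hxv.symm hyv.symm hxy
  have hwv : #(G.neighborFinset w ∩ G.neighborFinset v) < L :=
    card_neighborFinset_inter_lt (h.not_linked_of_adj hwv)
  have := h.degree_le_of_not_linked hxy' hxw hyw
  have hsum := degree_add_degree_add_degree_le hxy' hxw hyw
  set U := G.neighborFinset x ∪ (G.neighborFinset y ∪ G.neighborFinset w)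
  have hcover : G.neighborFinset v ⊆ G.neighborFinset x ∩ G.neighborFinset v ∪
      (G.neighborFinset y ∩ G.neighborFinset v ∪ G.neighborFinset w ∩ G.neighborFinset v) ∪ Uᶜ := by
    grind [mem_compl]
  have hcard : #(G.neighborFinset v) ≤ #(G.neighborFinset x ∩ G.neighborFinset v) +
      (#(G.neighborFinset y ∩ G.neighborFinset v) + #(G.neighborFinset w ∩ G.neighborFinset v)) +
      #Uᶜ := by
    refine (card_le_card hcover).trans ((card_union_le _ _).trans ?_)
    grw [card_union_le, card_union_le]
  have := card_add_card_compl U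
  have := card_sdiff_add_card_inter (G.neighborFinset x) (G.neighborFinset v)
  have := h.card_le
  have := G.minDegree_le_degree v; have := G.minDegree_le_degree y
  have := G.minDegree_le_degree w; have := G.minDegree_le_degree x
  simp only [card_neighborFinset_eq_degree] at *
  omega

theorem card_neighborFinset_sdiff_linkClass_le (h : BipartiteLike G L) (hxy : G.Adj x y)
    (hxw : ¬Linked G univ L x w) (hyw : ¬Linked G univ L y w)
    (hcard : 2 * L ≤ #(G.neighborFinset w ∩ linkClass G L x)) :
    #(G.neighborFinset x \ linkClass G L w) ≤ 40 * L := by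
  obtain ⟨X, hX, hXcard⟩ := exists_subset_card_eq hcard
  have hXmem : ∀ v ∈ X, G.Adj w v ∧ Linked G univ L x v := fun v hv ↦ by
    simpa [mem_linkClass] using hX hv
  set A := G.neighborFinset x \ linkClass G L w with hA
  have hAmem : ∀ a ∈ A, G.Adj x a ∧ ¬Linked G univ L w a := by simp [hA, mem_linkClass]
  have hcount : #A * L ≤ #X * (20 * L) := by
    refine card_mul_le_card_mul (fun a v ↦ ¬G.Adj a v) (fun a ha ↦ ?_) fun v hv ↦ ?_
    · have hsplit : #{v ∈ X | G.Adj a v} + #{v ∈ X | ¬G.Adj a v} = #X :=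
        card_filter_add_card_filter_not _
      have hadj : #{v ∈ X | G.Adj a v} ≤ #(G.neighborFinset w ∩ G.neighborFinset a) :=
        card_le_card fun v hv ↦ by simpa [hXmem v (mem_filter.1 hv).1] using (mem_filter.1 hv).2
      have := card_neighborFinset_inter_lt (hAmem a ha).2
      rw [bipartiteAbove]
      omega
    · refine le_trans (card_le_card fun a ha ↦ ?_)
        (h.card_neighborFinset_sdiff_le hxy hxw hyw (hXmem v hv).2 (hXmem v hv).1)
      rw [bipartiteBelow, mem_filter] at ha
      simpa [(hAmem a ha.1).1] using fun hva ↦ ha.2 hva.symm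
  rw [hXcard] at hcount
  exact Nat.le_of_mul_le_mul_right (by linarith) h.pos

theorem minDegree_add_le_card_linkClass (h : BipartiteLike G L) (hxy : G.Adj x y)
    (hxw : ¬Linked G univ L x w) (hyw : ¬Linked G univ L y w)
    (hy : ∀ a b, G.Adj y a → G.Adj y b → Linked G univ L a b)
    (hcard : #(G.neighborFinset w ∩ linkClass G L y) < 2 * L) :
    2 * G.minDegree ≤ #(linkClass G L x) + 3 * L := by
  set X := G.neighborFinset w ∩ linkClass G L x with hX
  have hcover : G.neighborFinset w ⊆ (G.neighborFinset w ∩ linkClass G L y) ∪ X := by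
    intro v hv
    have hwv := h.not_linked_of_adj ((G.mem_neighborFinset w v).1 hv)
    have := h.linked_or_linked_or_linked (h.not_linked_of_adj hxy) hxw hyw v
    simp only [hX, mem_union, mem_inter, mem_linkClass]
    tauto
  have hunion : X ∪ G.neighborFinset y ⊆ linkClass G L x := by
    refine union_subset inter_subset_right fun v hv ↦ mem_linkClass.2 ?_
    exact hy _ _ hxy.symm ((G.mem_neighborFinset y v).1 hv)
  have hinter : X ∩ G.neighborFinset y ⊆ G.neighborFinset y ∩ G.neighborFinset w := by
    intro v hv
    simp only [hX, mem_inter] at hv ⊢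
    tauto
  have := (card_le_card hcover).trans (card_union_le _ _)
  have := card_le_card hunion; have := card_le_card hinter
  have := card_union_add_card_inter X (G.neighborFinset y)
  have := card_neighborFinset_inter_lt hyw
  have := G.minDegree_le_degree y; have := G.minDegree_le_degree w
  simp only [card_neighborFinset_eq_degree] at *
  omega

theorem minDegree_add_le_card_linkClass_of_sdiff (h : BipartiteLike G L) (hxy : G.Adj x y)
    (hx : #(G.neighborFinset x \ linkClass G L w) ≤ 40 * L)
    (hy : #(G.neighborFinset y \ linkClass G L w) ≤ 40 * L) :
    2 * G.minDegree ≤ #(linkClass G L w) + 100 * L := by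
  set W := linkClass G L w
  have hinter : (G.neighborFinset x ∩ W) ∩ (G.neighborFinset y ∩ W) ⊆
      G.neighborFinset x ∩ G.neighborFinset y :=
    inter_subset_inter inter_subset_left inter_subset_left
  have := card_le_card hinter
  have := card_le_card (union_subset (inter_subset_right (s₁ := G.neighborFinset x) (s₂ := W))
    (inter_subset_right (s₁ := G.neighborFinset y) (s₂ := W)))
  have := card_sdiff_add_card_inter (G.neighborFinset x) W
  have := card_sdiff_add_card_inter (G.neighborFinset y) W
  have := card_union_add_card_inter (G.neighborFinset x ∩ W) (G.neighborFinset y ∩ W)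
  have := card_neighborFinset_inter_lt (h.not_linked_of_adj hxy)
  have := G.minDegree_le_degree x; have := G.minDegree_le_degree y
  simp only [card_neighborFinset_eq_degree] at *
  omega

-- Otherwise one of the three link classes of a coherent edge `xy` and of a vertex `w` linked to
-- neither end would be an independent set of size almost `2δ`.
theorem colorable_two (h : BipartiteLike G L) : G.Colorable 2 := by
  obtain hcol | ⟨x, y, hxy, hx, hy⟩ := h.colorable_two_or_exists_coherent_edge
  · exact hcol
  obtain hcol | ⟨w, hxw, hyw⟩ := h.colorable_two_or_exists_not_linked x y
  · exact hcol
  by_cases hwy : #(G.neighborFinset w ∩ linkClass G L y) < 2 * L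
  · have := h.minDegree_add_le_card_linkClass hxy hxw hyw hy hwy
    exact h.colorable_two_of_isIndepSet (h.isIndepSet_linkClass x) (by omega)
  by_cases hwx : #(G.neighborFinset w ∩ linkClass G L x) < 2 * L
  · have := h.minDegree_add_le_card_linkClass hxy.symm hyw hxw hx hwx
    exact h.colorable_two_of_isIndepSet (h.isIndepSet_linkClass y) (by omega)
  · exact h.colorable_two_of_isIndepSet (h.isIndepSet_linkClass w)
      (h.minDegree_add_le_card_linkClass_of_sdiff hxy
        (h.card_neighborFinset_sdiff_linkClass_le hxy hxw hyw (by omega))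
        (h.card_neighborFinset_sdiff_linkClass_le hxy.symm hyw hxw (by omega)))

end BipartiteLike

end ShortCycles

theorem hasCycle_of_add_lt {V : Type*} [Fintype V] {G : SimpleGraph V} [DecidableRel G.Adj]
    {L t : ℕ} (hcol : ¬G.Colorable 2) (hcard : Fintype.card V ≤ 3 * G.minDegree)
    (hL : 1000 * L ≤ G.minDegree) (ht : 4 ≤ t) (htL : t + 1 < L) : HasCycle G t := by
  classical
  have hP : HasLinkedPairs G Finset.univ 4 L := hasLinkedPairs_univ (by omega)
  obtain ⟨k, rfl | rfl⟩ : ∃ k, t = 2 * k + 4 ∨ t = 2 * k + 5 := ⟨(t - 4) / 2, by omega⟩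
  · have : Nonempty V := not_isEmpty_iff.1 fun _ ↦ hcol (.of_isEmpty 2)
    have := G.minDegree_lt_card
    exact hP.hasCycle_even (by omega) (by omega)
  · by_contra hno
    refine hcol (BipartiteLike.colorable_two (L := L) ⟨by omega, hL, hcard, ?_, ?_⟩)
    · exact fun hp hq hadj ↦ hno (hP.hasCycle_of_linked_of_linked_of_adj hp hq hadj (by omega))
    · exact fun hxy hxa hyb hab hay hbx hlinked ↦ hno
        (hP.hasCycle_of_adj_of_linked_neighbors hxy hxa hyb hab hay hbx hlinked (by omega))

/-! ### Lengthening a cycle -/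

section Insertion

open Finset

theorem exists_mem_succ_mem {J : Finset ℕ} {n : ℕ} (hJ : J ⊆ range n) (hn : n + 1 < 2 * #J) :
    ∃ i ∈ J, i + 1 ∈ J := by
  by_contra! hno
  have hdisj : Disjoint J (J.image Nat.succ) := by
    rw [disjoint_right]
    rintro _ hi
    obtain ⟨i, hiJ, rfl⟩ := mem_image.1 hi
    exact hno i hiJ
  have hcard := card_union_of_disjoint hdisj
  rw [card_image_of_injective _ Nat.succ_injective] at hcard
  have hsub : J ∪ J.image Nat.succ ⊆ range (n + 1) := by grind
  have := card_le_card hsub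
  rw [card_range] at this
  omega

theorem exists_subset_close_of_same_parity {J : Finset ℕ} {n w m : ℕ} (hw : 0 < w)
    (hJ : J ⊆ range n) (hcard : (n / w + 1) * 2 * m < #J) :
    ∃ F ⊆ J, m < #F ∧ ∀ i ∈ F, ∀ j ∈ F, i < j → ∃ k, j = i + 2 * (k + 1) ∧ 2 * (k + 1) < w := by
  obtain ⟨c, -, hc⟩ := exists_lt_card_fiber_of_mul_lt_card_of_maps_to (s := J)
    (t := range (n / w + 1) ×ˢ range 2) (f := fun i ↦ (i / w, i % 2)) (n := m) (fun i hi ↦ by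
      have hi := mem_range.1 (hJ hi)
      have : i / w ≤ n / w := Nat.div_le_div_right hi.le
      exact mem_product.2 ⟨mem_range.2 (by dsimp only; omega), mem_range.2 (by dsimp only; omega)⟩)
    (by simpa using hcard)
  refine ⟨_, filter_subset _ _, hc, fun i hi j hj hij ↦ ⟨(j - i) / 2 - 1, ?_⟩⟩
  have hsame := (mem_filter.1 hi).2.trans (mem_filter.1 hj).2.symm
  simp only [Prod.mk.injEq] at hsame
  have hlt : j - i < w := by
    have hi := Nat.div_add_mod i w
    have hj := Nat.div_add_mod j w
    have := Nat.mod_lt j hw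
    rw [hsame.1] at hi
    omega
  omega

variable {V : Type*} [DecidableEq V] {l : List V} {C S : Finset V} {i m : ℕ}

/-- The positions `i` of `l` such that the entry `m` places further on exists and lies in `S`. -/
def positions (l : List V) (S : Finset V) (m : ℕ) : Finset ℕ :=
  {i ∈ range l.length | ∃ h : i + m < l.length, l[i + m] ∈ S}

theorem mem_positions : i ∈ positions l S m ↔ ∃ h : i + m < l.length, l[i + m] ∈ S := by
  rw [positions, mem_filter, mem_range]
  exact ⟨And.right, fun h ↦ ⟨by have := h.1; omega, h⟩⟩

theorem positions_subset_range : positions l S m ⊆ range l.length :=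
  filter_subset _ _

theorem card_positions_le (hl : l.Nodup) : #(positions l S m) ≤ #(S ∩ l.toFinset) := by
  refine card_le_card_of_forall_subsingleton (fun i v ↦ l[i + m]? = some v) ?_ ?_
  · intro i hi
    obtain ⟨hlt, hmem⟩ := mem_positions.1 hi
    exact ⟨l[i + m], by simp [hmem], by simp [hlt]⟩
  · rintro v - i ⟨-, hi⟩ j ⟨-, hj⟩
    obtain ⟨hi, hiv⟩ := List.getElem?_eq_some_iff.1 hi
    obtain ⟨hj, hjv⟩ := List.getElem?_eq_some_iff.1 hj
    have := hl.getElem_inj_iff.1 (hiv.trans hjv.symm)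
    omega

theorem card_inter_toFinset_le_card_positions : #(S ∩ l.toFinset) ≤ #(positions l S 0) := by
  refine card_le_card_of_injOn l.idxOf (fun v hv ↦ ?_) fun v hv w _ hvw ↦ ?_
  · simp only [coe_inter, Set.mem_inter_iff, mem_coe, List.mem_toFinset] at hv
    exact mem_positions.2 ⟨List.idxOf_lt_length_of_mem hv.2, by simpa using hv.1⟩
  · simp only [coe_inter, Set.mem_inter_iff, mem_coe, List.mem_toFinset] at hv
    exact (List.idxOf_inj hv.2).1 hvw

variable [Fintype V] {G : SimpleGraph V} [DecidableRel G.Adj] {z z' : V} {K : Finset V}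

theorem HasCycleOn.insert_of_lt_two_mul_card (h : HasCycleOn G C) (hz : z ∉ C)
    (hcard : #C + 1 < 2 * #(G.neighborFinset z ∩ C)) : HasCycleOn G (insert z C) := by
  obtain ⟨l, hl, rfl⟩ := h
  rw [hl.card_toFinset] at hcard
  have hpos := card_inter_toFinset_le_card_positions (S := G.neighborFinset z) (l := l)
  obtain ⟨i, hi, hi'⟩ := exists_mem_succ_mem
    (positions_subset_range (l := l) (S := G.neighborFinset z) (m := 0)) (by omega)
  obtain ⟨hlt, hadj⟩ := mem_positions.1 hi
  obtain ⟨hlt', hadj'⟩ := mem_positions.1 hi'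
  exact hl.hasCycleOn_insert_of_adj_of_adj hlt' (by simpa using hz) (by simpa using hadj)
    (by simpa using hadj')

theorem HasCycleOn.insert_of_card_sdiff_le (h : HasCycleOn G C) (hz : z ∉ C)
    (hK : ∀ v ∈ C, v ∉ K → #(C \ G.neighborFinset v) ≤ m)
    (hcard : #K + m + 2 < #(G.neighborFinset z ∩ C)) : HasCycleOn G (insert z C) := by
  obtain ⟨l, hl, rfl⟩ := h
  have hpos := card_inter_toFinset_le_card_positions (S := G.neighborFinset z) (l := l)
  set J := positions l (G.neighborFinset z) 0 \ insert (l.length - 1) (positions l K 1) with hJ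
  have hJcard : m + 2 ≤ #J := by
    have := le_card_sdiff (insert (l.length - 1) (positions l K 1))
      (positions l (G.neighborFinset z) 0)
    have := card_insert_le (l.length - 1) (positions l K 1)
    have := (card_positions_le (m := 1) (S := K) hl.nodup).trans (card_le_card inter_subset_left)
    rw [hJ]
    omega
  have hJmem : ∀ i ∈ J, ∃ h : i + 1 < l.length, G.Adj z l[i] ∧ l[i + 1] ∉ K := by
    intro i hi
    simp only [hJ, mem_sdiff, mem_insert, not_or, mem_positions, not_exists] at hi
    obtain ⟨⟨hlt, hadj⟩, hlast, hK⟩ := hi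
    exact ⟨by omega, by simpa using hadj, hK (by omega)⟩
  obtain ⟨i, hiJ⟩ : J.Nonempty := card_pos.1 (by omega)
  obtain ⟨hi, hzi, hiK⟩ := hJmem i hiJ
  set B := insert i (positions l (l.toFinset \ G.neighborFinset l[i + 1]) 1) with hB
  obtain ⟨j, hjJ, hjB⟩ : ∃ j ∈ J, j ∉ B := by
    refine exists_mem_notMem_of_card_lt_card ?_
    have := card_insert_le i (positions l (l.toFinset \ G.neighborFinset l[i + 1]) 1)
    have := (card_positions_le (m := 1) (S := l.toFinset \ G.neighborFinset l[i + 1])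
      hl.nodup).trans (card_le_card inter_subset_left)
    have := hK l[i + 1] (by simp) hiK
    rw [hB]
    omega
  obtain ⟨hj, hzj, -⟩ := hJmem j hjJ
  simp only [hB, mem_insert, not_or, mem_positions, not_exists, mem_sdiff, mem_neighborFinset,
    not_and, not_not] at hjB
  have hadj : G.Adj l[i + 1] l[j + 1] := hjB.2 hj (by simp)
  have hz : z ∉ l := by simpa using hz
  rcases lt_or_gt_of_ne hjB.1 with hlt | hlt
  · exact hl.hasCycleOn_insert_of_crossing hlt hi hz hzj hzi hadj.symm
  · exact hl.hasCycleOn_insert_of_crossing hlt hj hz hzi hzj hadj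

theorem HasCycleOn.hasCycle_add_two_of_lt_two_mul_card (h : HasCycleOn G C) (hz : z ∉ C)
    (hz' : z' ∉ C) (hne : z ≠ z') (hcard : #C + 2 < 2 * #(G.neighborFinset z ∩ C))
    (hcard' : #C + 2 < 2 * #(G.neighborFinset z' ∩ C)) : HasCycle G (#C + 2) := by
  have hmono : #(G.neighborFinset z' ∩ C) ≤ #(G.neighborFinset z' ∩ insert z C) := by
    grw [← subset_insert z C]
  have hinsert : #(insert z C) = #C + 1 := card_insert_of_notMem hz
  have hz'_insert : z' ∉ insert z C := by simp [hne.symm, hz']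
  have hcycle := (h.insert_of_lt_two_mul_card hz (by omega)).insert_of_lt_two_mul_card hz'_insert
    (by omega)
  simpa [card_insert_of_notMem hz'_insert, hinsert] using hcycle.hasCycle

theorem HasCycleOn.hasCycle_add_two_of_card_sdiff_le (h : HasCycleOn G C) (hz : z ∉ C)
    (hz' : z' ∉ C) (hne : z ≠ z') (hK : ∀ v ∈ C, v ∉ K → #(C \ G.neighborFinset v) ≤ m)
    (hcard : #K + m + 4 < #(G.neighborFinset z ∩ C))
    (hcard' : #K + m + 4 < #(G.neighborFinset z' ∩ C)) : HasCycle G (#C + 2) := by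
  have hmono : #(G.neighborFinset z' ∩ C) ≤ #(G.neighborFinset z' ∩ insert z C) := by
    grw [← subset_insert z C]
  have hz'_insert : z' ∉ insert z C := by simp [hne.symm, hz']
  have hK' : ∀ v ∈ insert z C, v ∉ insert z K →
      #(insert z C \ G.neighborFinset v) ≤ m + 1 := by
    intro v hv hvK
    rw [mem_insert, not_or] at hvK
    have hsub : insert z C \ G.neighborFinset v ⊆ insert z (C \ G.neighborFinset v) := by grind
    have := hK v ((mem_insert.1 hv).resolve_left hvK.1) hvK.2
    grw [hsub, card_insert_le, this]
  have := card_insert_le z K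
  have hcycle := (h.insert_of_card_sdiff_le hz hK (by omega)).insert_of_card_sdiff_le hz'_insert hK'
    (by omega)
  simpa [card_insert_of_notMem hz'_insert, card_insert_of_notMem hz] using hcycle.hasCycle

end Insertion

section Spikes

open Finset

variable {V : Type*} [Fintype V] [DecidableEq V] {G : SimpleGraph V} [DecidableRel G.Adj]
  {O K : Finset V} {l : List V} {L m r s : ℕ}

theorem HasLinkedPairs.exists_linked_of_greedy {α : Type*} (hP : HasLinkedPairs G O m L)
    (g : α → V) (hg : ∀ a, g a ∈ O) (R : α → α → Prop)
    (h : ∀ T : Finset α, #T < m → ∃ b, ∀ a ∈ T, g a ≠ g b ∧ (R a b ∨ R b a)) :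
    ∃ a b, R a b ∧ g a ≠ g b ∧ Linked G O L (g a) (g b) := by
  have hgreedy : ∀ k ≤ m, ∃ T : Finset α, #T = k ∧
      ∀ a ∈ T, ∀ b ∈ T, a ≠ b → g a ≠ g b ∧ (R a b ∨ R b a) := by
    intro k
    induction k with
    | zero => exact fun _ ↦ ⟨∅, by simp⟩
    | succ k ih =>
      intro hk
      obtain ⟨T, hT, hpair⟩ := ih (by omega)
      obtain ⟨b, hb⟩ := h T (by omega)
      exact ⟨cons b T fun hbT ↦ (hb b hbT).1 rfl, by rw [card_cons, hT], by grind⟩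
  obtain ⟨T, hT, hpair⟩ := hgreedy m le_rfl
  have hinj : Set.InjOn g T := fun a ha b hb hab ↦ by_contra fun hne ↦ (hpair a ha b hb hne).1 hab
  obtain ⟨_, hu, _, hv, huv, hlinked⟩ := hP (T.image g) (image_subset_iff.2 fun a _ ↦ hg a)
    (by rw [card_image_of_injOn hinj, hT])
  obtain ⟨a, ha, rfl⟩ := mem_image.1 hu
  obtain ⟨b, hb, rfl⟩ := mem_image.1 hv
  rcases (hpair a ha b hb (ne_of_apply_ne g huv)).2 with hR | hR
  · exact ⟨a, b, hR, huv, hlinked⟩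
  · exact ⟨b, a, hR, huv.symm, hlinked.symm⟩

/-- An edge from the entry `l[pos]` to a vertex `tip` of `O`; two spikes with linked tips are the
ends of a path through `O` that can be spliced into the cycle `l`. -/
structure Spike (G : SimpleGraph V) (l : List V) (O : Finset V) where
  pos : ℕ
  tip : V
  pos_lt : pos < l.length
  tip_mem : tip ∈ O
  adj : G.Adj l[pos] tip

theorem HasLinkedPairs.hasCycle_add_two_of_even_gap (hP : HasLinkedPairs G O m L)
    (hl : IsCycleList G l) (hO : ∀ v ∈ O, v ∉ l) {a b : Spike G l O} {k : ℕ}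
    (hpos : b.pos = a.pos + 2 * (k + 1)) (hk : 2 * k + m < L) (hne : a.tip ≠ b.tip)
    (hlinked : Linked G O L a.tip b.tip) : HasCycle G (l.length + 2) := by
  obtain ⟨q, hlength, hnodup, hchain, hq⟩ := hP.exists_path hlinked ∅ (by simpa using hk)
  have hdisj : ∀ v ∈ a.tip :: (q ++ [b.tip]), v ∉ l := by
    have := hO _ a.tip_mem
    have := hO _ b.tip_mem
    grind
  have hcycle := hl.detour (q := a.tip :: (q ++ [b.tip])) (i := a.pos) (by omega) b.pos_lt
    (by simp) (isChain_cons_concat a.adj hchain b.adj.symm) (by grind [List.nodup_append])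
    fun v hv ↦ ⟨fun h ↦ hdisj v hv (List.mem_of_mem_take h),
      fun h ↦ hdisj v hv (List.mem_of_mem_drop h)⟩
  refine ⟨_, hcycle, ?_⟩
  have := length_detour_add (q := a.tip :: (q ++ [b.tip])) (show a.pos < b.pos by omega) b.pos_lt
  simp only [List.length_cons, List.length_append, List.length_nil, hlength] at this
  omega

theorem HasLinkedPairs.hasCycle_add_two_of_close (hP : HasLinkedPairs G O m L)
    (hl : IsCycleList G l) (hO : ∀ v ∈ O, v ∉ l) {F : Finset ℕ} (hFcard : m ≤ #F)
    (hF : F ⊆ positions l {v | m ≤ #(G.neighborFinset v ∩ O)} 0)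
    (hclose : ∀ i ∈ F, ∀ j ∈ F, i < j → ∃ k, j = i + 2 * (k + 1) ∧ 2 * k + m < L) :
    HasCycle G (l.length + 2) := by
  have hnext : ∀ T : Finset {a : Spike G l O // a.pos ∈ F}, #T < m →
      ∃ b : {a : Spike G l O // a.pos ∈ F}, ∀ a ∈ T,
        a.1.tip ≠ b.1.tip ∧ (a.1.pos < b.1.pos ∨ b.1.pos < a.1.pos) := by
    intro T hT
    obtain ⟨i, hiF, hiT⟩ := exists_mem_notMem_of_card_lt_card
      ((card_image_le (s := T) (f := fun a ↦ a.1.pos)).trans_lt (hT.trans_le hFcard))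
    obtain ⟨hi, hmem⟩ := mem_positions.1 (hF hiF)
    simp only [add_zero, mem_filter, mem_univ, true_and] at hi hmem
    obtain ⟨z, hz, hzT⟩ := exists_mem_notMem_of_card_lt_card
      ((card_image_le (s := T) (f := fun a ↦ a.1.tip)).trans_lt (hT.trans_le hmem))
    rw [mem_inter, mem_neighborFinset] at hz
    refine ⟨⟨⟨i, z, hi, hz.2, hz.1⟩, hiF⟩, fun a ha ↦ ⟨?_, Nat.lt_or_gt_of_ne ?_⟩⟩
    · rintro rfl
      exact hzT (mem_image_of_mem _ ha)
    · rintro rfl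
      exact hiT (mem_image_of_mem _ ha)
  obtain ⟨a, b, hlt, hne, hlinked⟩ := hP.exists_linked_of_greedy
    (fun a : {a : Spike G l O // a.pos ∈ F} ↦ a.1.tip) (fun a ↦ a.1.tip_mem)
    (fun a b ↦ a.1.pos < b.1.pos) hnext
  obtain ⟨k, hpos, hk⟩ := hclose _ a.2 _ b.2 hlt
  exact hP.hasCycle_add_two_of_even_gap hl hO hpos hk hne hlinked

theorem HasLinkedPairs.hasCycle_add_two_of_lt_card_positions {w : ℕ}
    (hP : HasLinkedPairs G O (m + 1) L) (hl : IsCycleList G l) (hO : ∀ v ∈ O, v ∉ l) (hw : 0 < w)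
    (hwL : w + m ≤ L + 1)
    (hcard : (l.length / w + 1) * 2 * m <
      #(positions l {v | m + 1 ≤ #(G.neighborFinset v ∩ O)} 0)) :
    HasCycle G (l.length + 2) := by
  obtain ⟨F, hF, hFcard, hclose⟩ :=
    exists_subset_close_of_same_parity hw positions_subset_range hcard
  refine hP.hasCycle_add_two_of_close hl hO hFcard hF fun i hi j hj hij ↦ ?_
  obtain ⟨k, hk, hkw⟩ := hclose i hi j hj hij
  exact ⟨k, hk, by omega⟩

/-- A spike whose two successor entries on `l` exist and avoid the exceptional set `K`. -/
structure FreeSpike (G : SimpleGraph V) (l : List V) (O K : Finset V) extends Spike G l O where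
  pos_add_two_lt : pos + 2 < l.length
  succ_notMem : l[pos + 1] ∉ K
  succ_succ_notMem : l[pos + 2] ∉ K

namespace FreeSpike

/-- The cycle `l` can be rerouted through the tips of `a` and `b`, skipping the entry after
`a.pos` and using the chord from `l[a.pos + 2]` to `l[b.pos + 1]`. -/
def Crosses (a b : FreeSpike G l O K) : Prop :=
  a.pos + 2 ≤ b.pos ∧ G.Adj (l[a.pos + 2]'a.pos_add_two_lt)
    (l[b.pos + 1]'(Nat.lt_of_succ_lt b.pos_add_two_lt))

theorem Crosses.hasCycle_add_two {a b : FreeSpike G l O K} (hcross : a.Crosses b)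
    (hl : IsCycleList G l) (hO : ∀ v ∈ O, v ∉ l) (hL : 0 < L) (hne : a.tip ≠ b.tip)
    (hlinked : Linked G O L a.tip b.tip) : HasCycle G (l.length + 2) := by
  obtain ⟨c, hcO, -, hac, hbc⟩ := hlinked.exists_adj_adj_notMem (S := ∅) (by simpa)
  have hb := b.pos_add_two_lt
  have hcycle := hl.crossing (p := 1) (q := [a.tip, c, b.tip]) hcross.1 (Nat.lt_of_succ_lt hb)
    (by simp) (by simp [a.adj, hac, hbc.symm, b.adj.symm]) (by simp [hac.ne, hbc.ne', hne])
    (by simp [hO _ a.tip_mem, hO _ b.tip_mem, hO _ hcO]) hcross.2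
  refine ⟨_, hcycle, ?_⟩
  have := length_crossing_add (l := l) (q := [a.tip, c, b.tip]) hcross.1 (Nat.lt_of_succ_lt hb)
  simpa using this

/-- The positions at which a further spike need not cross `a`. -/
def blocked (a : FreeSpike G l O K) : Finset ℕ :=
  positions l (G.neighborFinset a.tip) 0 ∪
    (positions l (l.toFinset \ G.neighborFinset (l[a.pos + 2]'a.pos_add_two_lt)) 1 ∪
      positions l (l.toFinset \
        G.neighborFinset (l[a.pos + 1]'(Nat.lt_of_succ_lt a.pos_add_two_lt))) 2)

theorem card_blocked_le (a : FreeSpike G l O K) (hl : l.Nodup)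
    (hdense : ∀ v ∈ l, v ∉ K → #(l.toFinset \ G.neighborFinset v) ≤ r)
    (hsparse : ∀ z ∈ O, #(G.neighborFinset z ∩ l.toFinset) ≤ s) : #a.blocked ≤ s + 2 * r := by
  have hnonadj {v : V} (hv : v ∈ l) (hvK : v ∉ K) (i : ℕ) :
      #(positions l (l.toFinset \ G.neighborFinset v) i) ≤ r :=
    (card_positions_le hl).trans ((card_le_card inter_subset_left).trans (hdense v hv hvK))
  grw [blocked, card_union_le, card_union_le, card_positions_le hl, hsparse _ a.tip_mem,
    hnonadj (List.getElem_mem _) a.succ_succ_notMem, hnonadj (List.getElem_mem _) a.succ_notMem,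
    two_mul]

theorem crosses_or_crosses_of_notMem_blocked {a b : FreeSpike G l O K} (hb : b.pos ∉ a.blocked) :
    a.tip ≠ b.tip ∧ (a.Crosses b ∨ b.Crosses a) := by
  have hblt := b.pos_add_two_lt
  simp only [blocked, mem_union, mem_positions, mem_sdiff, mem_neighborFinset, List.mem_toFinset,
    List.getElem_mem, true_and, not_or, not_exists, not_not, add_zero] at hb
  obtain ⟨htip, hadj, hadj'⟩ := hb
  replace htip := htip b.pos_lt
  replace hadj := hadj (by omega)
  replace hadj' := hadj' hblt
  have hne : a.pos ≠ b.pos := fun h ↦ htip (by simpa [h] using a.adj.symm)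
  have hne_succ : a.pos + 2 ≠ b.pos + 1 := fun h ↦ hadj.ne (by simp only [h])
  have hne_succ' : a.pos + 1 ≠ b.pos + 2 := fun h ↦ hadj'.ne (by simp only [h])
  refine ⟨fun h ↦ htip (h ▸ b.adj.symm), ?_⟩
  rcases Nat.lt_or_gt_of_ne hne with hlt | hlt
  · exact .inl ⟨by omega, hadj⟩
  · exact .inr ⟨by omega, hadj'.symm⟩

theorem exists_forall_notMem_blocked (hl : l.Nodup)
    (hdense : ∀ v ∈ l, v ∉ K → #(l.toFinset \ G.neighborFinset v) ≤ r)
    (hsparse : ∀ z ∈ O, #(G.neighborFinset z ∩ l.toFinset) ≤ s)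
    (hout : ∀ v ∈ l, (G.neighborFinset v ∩ O).Nonempty) (T : Finset (FreeSpike G l O K))
    (hcard : 2 * #K + #T * (s + 2 * r) + 2 < l.length) :
    ∃ b : FreeSpike G l O K, ∀ a ∈ T, b.pos ∉ a.blocked := by
  have hK (i : ℕ) : #(positions l K i) ≤ #K :=
    (card_positions_le hl).trans (card_le_card inter_subset_left)
  have hbad : #((positions l K 1 ∪ positions l K 2) ∪ T.biUnion blocked) ≤
      #K + #K + #T * (s + 2 * r) := by
    grw [card_union_le, card_union_le, hK, hK,
      card_biUnion_le_card_mul _ _ _ fun a _ ↦ a.card_blocked_le hl hdense hsparse]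
  obtain ⟨i, hi, hgood⟩ := exists_mem_notMem_of_card_lt_card
    (hbad.trans_lt (show _ < #(range (l.length - 2)) by rw [card_range]; omega))
  simp only [mem_union, mem_positions, mem_biUnion, not_or, not_exists, not_and] at hgood
  have hi : i + 2 < l.length := by have := mem_range.1 hi; omega
  obtain ⟨z, hz⟩ := hout l[i] (List.getElem_mem _)
  rw [mem_inter, mem_neighborFinset] at hz
  exact ⟨⟨⟨i, z, by omega, hz.2, hz.1⟩, hi, hgood.1.1 (by omega), hgood.1.2 hi⟩, hgood.2⟩

end FreeSpike

theorem HasLinkedPairs.hasCycle_add_two_of_dense (hP : HasLinkedPairs G O m L)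
    (hl : IsCycleList G l) (hO : ∀ v ∈ O, v ∉ l) (hL : 0 < L)
    (hdense : ∀ v ∈ l, v ∉ K → #(l.toFinset \ G.neighborFinset v) ≤ r)
    (hsparse : ∀ z ∈ O, #(G.neighborFinset z ∩ l.toFinset) ≤ s)
    (hout : ∀ v ∈ l, (G.neighborFinset v ∩ O).Nonempty)
    (hcard : 2 * #K + m * (s + 2 * r) + 2 < l.length) : HasCycle G (l.length + 2) := by
  obtain ⟨a, b, hcross, hne, hlinked⟩ := hP.exists_linked_of_greedy
    (fun a : FreeSpike G l O K ↦ a.tip) (fun a ↦ a.tip_mem) FreeSpike.Crosses fun T hT ↦ by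
      obtain ⟨b, hb⟩ := FreeSpike.exists_forall_notMem_blocked hl.nodup hdense hsparse hout T
        (hcard.trans_le' (by gcongr))
      exact ⟨b, fun a ha ↦ FreeSpike.crosses_or_crosses_of_notMem_blocked (hb a ha)⟩
  exact hcross.hasCycle_add_two hl hO hL hne hlinked

end Spikes

section Growth

open Finset

variable {V : Type*} [Fintype V] [DecidableEq V] {G : SimpleGraph V} [DecidableRel G.Adj]
  {C R K : Finset V} {l : List V} {L : ℕ}

theorem minDegree_le_card_inter_add_card_inter_compl (v : V) :
    G.minDegree ≤ #(G.neighborFinset v ∩ C) + #R + #(G.neighborFinset v ∩ (C ∪ R)ᶜ) := by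
  have hsub : G.neighborFinset v ⊆
      ((G.neighborFinset v ∩ C) ∪ R) ∪ (G.neighborFinset v ∩ (C ∪ R)ᶜ) := by
    intro w hw
    simp only [mem_union, mem_inter, mem_compl, hw, true_and]
    tauto
  grw [G.minDegree_le_degree v, ← card_neighborFinset_eq_degree, hsub, card_union_le,
    card_union_le]

theorem hasLinkedPairs_compl (hR : #R ≤ 1)
    (hsparse : ∀ z ∉ C ∪ R, 2 * #(G.neighborFinset z ∩ C) ≤ G.minDegree + 1)
    (hn : Fintype.card V ≤ 3 * G.minDegree) (hL : 1000 * L ≤ G.minDegree) (hL0 : 0 < L) :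
    HasLinkedPairs G (C ∪ R)ᶜ 7 L := by
  refine hasLinkedPairs_of_le_card_inter (d := G.minDegree / 2 - 2) (fun z hz ↦ ?_) ?_
  · have := hsparse z (mem_compl.1 hz)
    have := minDegree_le_card_inter_add_card_inter_compl (G := G) (C := C) (R := R) z
    omega
  · have := card_le_univ (C ∪ R)ᶜ
    omega

theorem IsCycleList.hasCycle_add_two_of_dense (hl : IsCycleList G l) (hlength : 4000 ≤ l.length)
    (hδ : l.length + 1 ≤ G.minDegree) (hn : Fintype.card V ≤ 3 * G.minDegree)
    (hL : 1000 * L ≤ G.minDegree) (hL0 : 0 < L) (hK : 100 * #K ≤ l.length)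
    (hdense : ∀ v ∈ l, v ∉ K → #(l.toFinset \ G.neighborFinset v) ≤ 6) :
    HasCycle G (l.length + 2) := by
  have hcard := hl.card_toFinset
  set C := l.toFinset
  set R : Finset V := {z | z ∉ C ∧ #C ≤ 20 * #(G.neighborFinset z ∩ C)} with hR
  rcases lt_or_ge 1 #R with hRcard | hRcard
  · obtain ⟨z, z', hz, hz', hne⟩ := one_lt_card_iff.1 hRcard
    simp only [hR, mem_filter, mem_univ, true_and] at hz hz'
    rw [← hcard]
    have hcycle : HasCycleOn G C := hl.hasCycleOn
    exact hcycle.hasCycle_add_two_of_card_sdiff_le hz.1 hz'.1 hne (by simpa [C] using hdense)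
      (by omega) (by omega)
  have hsparse : ∀ z ∉ C ∪ R, #(G.neighborFinset z ∩ C) ≤ l.length / 20 := by
    intro z hz
    simp only [hR, mem_union, mem_filter, mem_univ, true_and, not_or, not_and, not_le] at hz
    have := hz.2 hz.1
    omega
  have hP := hasLinkedPairs_compl hRcard (fun z hz ↦ by have := hsparse z hz; omega) hn hL hL0
  refine hP.hasCycle_add_two_of_dense hl (by simp [C]; tauto) hL0 hdense
    (fun z hz ↦ hsparse z (mem_compl.1 hz)) (fun v hv ↦ card_pos.1 ?_) (by omega)
  have hproper : #(G.neighborFinset v ∩ C) < #C := card_lt_card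
    (inter_subset_right.ssubset_of_mem_notMem (List.mem_toFinset.2 hv) (by simp))
  have := minDegree_le_card_inter_add_card_inter_compl (G := G) (C := C) (R := R) v
  omega

end Growth

section AllLengths

open Finset

variable {V : Type*} [Fintype V] {G : SimpleGraph V} [DecidableRel G.Adj] {L t : ℕ}

theorem HasCycle.add_two (h : HasCycle G t) (ht : 4000 ≤ t) (hδ : t + 1 ≤ G.minDegree)
    (hn : Fintype.card V ≤ 3 * G.minDegree) (hL : 1000 * L ≤ G.minDegree) (hL_large : 3300 ≤ L) :
    HasCycle G (t + 2) := by
  classical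
  obtain ⟨l, hl, rfl⟩ := h
  have hcard := hl.card_toFinset
  set C := l.toFinset with hC
  set R : Finset V := {z | z ∉ C ∧ #C + 2 < 2 * #(G.neighborFinset z ∩ C)} with hR
  rcases lt_or_ge 1 #R with hRcard | hRcard
  · obtain ⟨z, z', hz, hz', hne⟩ := one_lt_card_iff.1 hRcard
    simp only [hR, mem_filter, mem_univ, true_and] at hz hz'
    rw [← hcard]
    exact hl.hasCycleOn.hasCycle_add_two_of_lt_two_mul_card hz.1 hz'.1 hne hz.2 hz'.2
  set S : Finset V := {v | 7 ≤ #(G.neighborFinset v ∩ (C ∪ R)ᶜ)} with hS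
  rcases lt_or_ge l.length (100 * #(positions l S 0)) with hmany | hfew
  · have hP : HasLinkedPairs G (C ∪ R)ᶜ 7 L := by
      refine hasLinkedPairs_compl hRcard (fun z hz ↦ ?_) hn hL (by omega)
      simp only [hR, mem_union, mem_filter, mem_univ, true_and, not_or, not_and, not_lt] at hz
      have := hz.2 hz.1
      omega
    exact hP.hasCycle_add_two_of_lt_card_positions (w := 3200) hl (by simp [C]; tauto) (by simp)
      (by omega) (by rw [← hS]; omega)
  · have : #(S ∩ C) ≤ #(positions l S 0) := card_inter_toFinset_le_card_positions
    refine hl.hasCycle_add_two_of_dense (K := S ∩ C) ht hδ hn hL (by omega) (by omega) ?_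
    intro v hv hvK
    have hvS : #(G.neighborFinset v ∩ (C ∪ R)ᶜ) < 7 := by simpa [hS, hv, C] using hvK
    have := minDegree_le_card_inter_add_card_inter_compl (G := G) (C := C) (R := R) v
    have := card_sdiff_add_card_inter C (G.neighborFinset v)
    rw [inter_comm] at this
    rw [← hC]
    omega

theorem hasCycle_of_le_minDegree_add_one (hcol : ¬G.Colorable 2)
    (hn : Fintype.card V ≤ 3 * G.minDegree) (hL : 1000 * L ≤ G.minDegree) (hL_large : 4003 ≤ L)
    (ht : 4 ≤ t) (htδ : t ≤ G.minDegree + 1) : HasCycle G t := by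
  induction t using Nat.strong_induction_on with
  | _ t ih =>
    rcases le_or_gt t 4001 with hsmall | hlarge
    · exact hasCycle_of_add_lt hcol hn hL ht (by omega)
    · obtain ⟨s, rfl⟩ := Nat.exists_eq_add_of_le' (show 2 ≤ t by omega)
      exact (ih s (by omega) (by omega) (by omega)).add_two (by omega) (by omega) hn hL (by omega)

end AllLengths

theorem stmt11_general {V : Type*} [Fintype V] (G : SimpleGraph V) [DecidableRel G.Adj]
    (hcard : 15000000 ≤ Fintype.card V) (hcol : ¬G.Colorable 2)
    (hδ : Fintype.card V ≤ 3 * G.minDegree) {t : ℕ} (ht : 4 ≤ t) (htδ : t ≤ G.minDegree + 1) :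
    ∃ (v : V) (c : G.Walk v v), c.IsCycle ∧ c.length = t :=
  (hasCycle_of_le_minDegree_add_one (L := 5000) hcol hδ (by omega) (by omega) ht
    htδ).exists_isCycle

/-- A non-bipartite connected graph of sufficiently large order `n` with `δ(G) ≥ n/3`
contains a cycle of every length `t` with `4 ≤ t ≤ δ(G)+1`. -/
theorem stmt11 :
    ∃ N : ℕ, ∀ n : ℕ, N ≤ n → ∀ (G : SimpleGraph (Fin n)) [DecidableRel G.Adj],
      G.Connected → ¬ G.Colorable 2 → (n : ℝ) / 3 ≤ (G.minDegree : ℝ) →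
      ∀ t : ℕ, 4 ≤ t → t ≤ G.minDegree + 1 →
        ∃ (v : Fin n) (c : G.Walk v v), c.IsCycle ∧ c.length = t := by
  refine ⟨15000000, fun n hn G _ _ hcol hδ t ht htδ ↦ stmt11_general G (by simpa) hcol ?_ ht htδ⟩
  rw [Fintype.card_fin]
  exact_mod_cast (show (n : ℝ) ≤ 3 * G.minDegree by linarith)
end
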